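/- arXiv:1708.06054 — 4 statements merged into one kernel-verified Lean document; each statement's English description precedes it below -/
import Mathlib

section
/- The Fermat cubic fourfold X: x₁³+⋯+x₆³ = 0 over the algebraic closure of F₂ contains exactly 891 linear planes, and every one of them is defined over F₄. -/
open scoped BigOperators

/-- A plane contained in the Fermat cubic fourfold `x₁³+⋯+x₆³ = 0 ⊂ P⁵`. -/
def IsFermatPlane (K : Type*) [Field K] (P : Submodule K (Fin 6 → K)) : Prop :=
  Module.finrank K ↥P = 3 ∧ ∀ x ∈ P, ∑ i, x i ^ 3 = 0

namespace FermatPlanes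

/-! ### Codes for the field with four elements -/

/-- addition of codes: `2` stands for `ω`, `3` for `ω + 1` -/
def addC (a b : Fin 4) : Fin 4 :=
  (![![0, 1, 2, 3], ![1, 0, 3, 2], ![2, 3, 0, 1], ![3, 2, 1, 0]] : Fin 4 → Fin 4 → Fin 4) a b

/-- multiplication of codes -/
def mulC (a b : Fin 4) : Fin 4 :=
  (![![0, 0, 0, 0], ![0, 1, 2, 3], ![0, 2, 3, 1], ![0, 3, 1, 2]] : Fin 4 → Fin 4 → Fin 4) a b

/-- coded vectors of length three -/
abbrev Vec := Fin 4 × Fin 4 × Fin 4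

/-- the Hermitian form on coded vectors -/
def herm (u v : Vec) : Fin 4 :=
  addC (addC (mulC (mulC u.1 u.1) v.1) (mulC (mulC u.2.1 u.2.1) v.2.1))
    (mulC (mulC u.2.2 u.2.2) v.2.2)

/-- coded unit vectors -/
abbrev U1 := {u : Vec // herm u u = 1}
/-- coded unit vectors orthogonal to `u` -/
abbrev U2 (u : Vec) := {v : Vec // herm v v = 1 ∧ herm u v = 0}
/-- coded unit vectors orthogonal to `u` and `v` -/
abbrev U3 (u v : Vec) := {w : Vec // herm w w = 1 ∧ herm u w = 0 ∧ herm v w = 0}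

/-- coded unitary matrices -/
abbrev A := Σ u : U1, Σ v : U2 u.1, U3 u.1 v.1
/-- codes of the other planes -/
abbrev B := (Fin 3 × Fin 3) × (Fin 3 × Fin 3 × Fin 3)

theorem card_U1 : Fintype.card U1 = 36 := by decide +kernel
theorem card_U2 : ∀ u : Vec, herm u u = 1 → Fintype.card (U2 u) = 6 := by decide +kernel
theorem card_U3 : ∀ u : Vec, herm u u = 1 → ∀ v : Vec, herm v v = 1 ∧ herm u v = 0 →
    Fintype.card (U3 u v) = 3 := by decide +kernel

theorem card_AB : Nat.card (A ⊕ B) = 891 := by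
  rw [Nat.card_eq_fintype_card, Fintype.card_sum, Fintype.card_sigma]
  have h : ∀ u : U1, Fintype.card (Σ v : U2 u.1, U3 u.1 v.1) = 18 := by
    intro u
    rw [Fintype.card_sigma, Finset.sum_congr rfl (fun v _ => card_U3 u.1 u.2 v.1 v.2)]
    simp only [Finset.sum_const, Finset.card_univ, card_U2 u.1 u.2]
    rfl
  rw [Finset.sum_congr rfl (fun u _ => h u)]
  simp only [Finset.sum_const, Finset.card_univ, card_U1]
  simp

variable {K : Type*} [Field K]

/-- decoding -/
def dec (w : K) : Fin 4 → K := ![0, 1, w, w + 1]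
/-- decoding of cube roots of unity -/
def dec3 (w : K) : Fin 3 → K := ![1, w, w + 1]

theorem two_eq [CharP K 2] : (2 : K) = 0 := by exact_mod_cast CharP.cast_eq_zero K 2

theorem dec_add [CharP K 2] (w : K) (a b : Fin 4) :
    dec w (addC a b) = dec w a + dec w b := by
  have h2 := two_eq (K := K)
  fin_cases a <;> fin_cases b <;> simp [dec, addC] <;> grind

theorem dec_mul [CharP K 2] (w : K) (hw : w ^ 2 + w + 1 = 0) (a b : Fin 4) :
    dec w (mulC a b) = dec w a * dec w b := by
  have h2 := two_eq (K := K)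
  fin_cases a <;> fin_cases b <;> simp [dec, mulC] <;> grind

theorem dec_inj [CharP K 2] (w : K) (hw : w ^ 2 + w + 1 = 0) : Function.Injective (dec w) := by
  have h2 := two_eq (K := K)
  intro a b
  fin_cases a <;> fin_cases b <;> simp [dec] <;> grind

theorem dec3_inj [CharP K 2] (w : K) (hw : w ^ 2 + w + 1 = 0) : Function.Injective (dec3 w) := by
  have h2 := two_eq (K := K)
  intro a b
  fin_cases a <;> fin_cases b <;> simp [dec3] <;> grind

theorem dec_surj [CharP K 2] (w : K) (hw : w ^ 2 + w + 1 = 0) (x : K) (hx : x ^ 4 = x) :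
    ∃ a, dec w a = x := by
  have h2 := two_eq (K := K)
  have : x * ((x + 1) * ((x + w) * (x + w + 1))) = 0 := by grind
  rcases mul_eq_zero.1 this with h | h
  · exact ⟨0, by simp [dec, h]⟩
  rcases mul_eq_zero.1 h with h | h
  · exact ⟨1, by simp [dec]; grind⟩
  rcases mul_eq_zero.1 h with h | h
  · exact ⟨2, by simp [dec]; grind⟩
  · exact ⟨3, by simp [dec]; grind⟩

theorem dec3_surj [CharP K 2] (w : K) (hw : w ^ 2 + w + 1 = 0) (x : K) (hx : x ^ 3 = 1) :
    ∃ a, dec3 w a = x := by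
  have h2 := two_eq (K := K)
  have h : ((x + 1) * ((x + w) * (x + w + 1))) = 0 := by grind
  rcases mul_eq_zero.1 h with h | h
  · exact ⟨0, by simp [dec3]; grind⟩
  rcases mul_eq_zero.1 h with h | h
  · exact ⟨1, by simp [dec3]; grind⟩
  · exact ⟨2, by simp [dec3]; grind⟩

theorem dec_pow [CharP K 2] (w : K) (hw : w ^ 2 + w + 1 = 0) (a : Fin 4) :
    dec w a ^ 4 = dec w a := by
  have h2 := two_eq (K := K)
  fin_cases a <;> simp [dec] <;> grind

theorem dec3_pow [CharP K 2] (w : K) (hw : w ^ 2 + w + 1 = 0) (a : Fin 3) :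
    dec3 w a ^ 3 = 1 := by
  have h2 := two_eq (K := K)
  fin_cases a <;> simp [dec3] <;> grind

theorem dec_herm [CharP K 2] (w : K) (hw : w ^ 2 + w + 1 = 0) (u v : Vec) :
    dec w (herm u v) = dec w u.1 ^ 2 * dec w v.1 + dec w u.2.1 ^ 2 * dec w v.2.1
      + dec w u.2.2 ^ 2 * dec w v.2.2 := by
  simp only [herm, dec_add, dec_mul w hw]
  ring

/-! ### The Hermitian-type form -/

/-- the form `∑ x² y` -/
def hf {n : ℕ} (x y : Fin n → K) : K := ∑ i, x i ^ 2 * y i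

theorem polar [CharP K 2] (w : K) (hw : w ^ 2 + w + 1 = 0) {P : Submodule K (Fin 6 → K)}
    (hP : IsFermatPlane K P) {x y : Fin 6 → K} (hx : x ∈ P) (hy : y ∈ P) : hf x y = 0 := by
  have h2 := two_eq (K := K)
  have h := hP.2
  have e1 := h x hx
  have e2 := h y hy
  have e3 := h (x + y) (P.add_mem hx hy)
  have e4 := h (x + w • y) (P.add_mem hx (P.smul_mem _ hy))
  have key : ∀ t : K, ∑ i, (x + t • y) i ^ 3
      = ∑ i, x i ^ 3 + t * hf x y + t ^ 2 * hf y x + t ^ 3 * ∑ i, y i ^ 3 := by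
    intro t
    simp only [hf, Finset.mul_sum, ← Finset.sum_add_distrib]
    refine Finset.sum_congr rfl fun i _ => ?_
    simp only [Pi.add_apply, Pi.smul_apply, smul_eq_mul]
    linear_combination (x i ^ 2 * t * y i + x i * t ^ 2 * y i ^ 2) * h2
  have k1 := key 1
  have k2 := key w
  rw [one_smul, e3, e1, e2] at k1
  rw [e4, e1, e2] at k2
  grind

theorem cube_comb [CharP K 2] (g0 g1 g2 : Fin 6 → K) (a b c : K) :
    ∑ i, (a • g0 + b • g1 + c • g2) i ^ 3 =
      a ^ 3 * hf g0 g0 + b ^ 3 * hf g1 g1 + c ^ 3 * hf g2 g2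
      + a ^ 2 * b * hf g0 g1 + a ^ 2 * c * hf g0 g2 + b ^ 2 * c * hf g1 g2
      + b ^ 2 * a * hf g1 g0 + c ^ 2 * a * hf g2 g0 + c ^ 2 * b * hf g2 g1 := by
  have h2 := two_eq (K := K)
  simp only [hf, Finset.mul_sum, ← Finset.sum_add_distrib]
  refine Finset.sum_congr rfl fun i _ => ?_
  simp only [Pi.add_apply, Pi.smul_apply, smul_eq_mul]
  generalize g0 i = x
  generalize g1 i = y
  generalize g2 i = z
  linear_combination (a^2*b*x^2*y + a^2*c*x^2*z + b^2*c*y^2*z + b^2*a*y^2*x + c^2*a*z^2*x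
    + c^2*b*z^2*y + 3*a*b*c*x*y*z) * h2

theorem isFermat_of [CharP K 2] (g : Fin 3 → Fin 6 → K) (hg : LinearIndependent K g)
    (h : ∀ i j, hf (g i) (g j) = 0) : IsFermatPlane K (Submodule.span K (Set.range g)) := by
  refine ⟨?_, ?_⟩
  · rw [finrank_span_eq_card hg]; rfl
  · intro x hx
    obtain ⟨c, rfl⟩ := (Submodule.mem_span_range_iff_exists_fun K).1 hx
    rw [Fin.sum_univ_three, cube_comb]
    simp [h]

/-! ### The two families -/

/-- basis of a graph plane -/
def gA (w : K) (t : A) : Fin 3 → Fin 6 → K :=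
  ![![1, 0, 0, dec w t.1.1.1, dec w t.1.1.2.1, dec w t.1.1.2.2],
    ![0, 1, 0, dec w t.2.1.1.1, dec w t.2.1.1.2.1, dec w t.2.1.1.2.2],
    ![0, 0, 1, dec w t.2.2.1.1, dec w t.2.2.1.2.1, dec w t.2.2.1.2.2]]

/-- the vector `e_{m+1} + b e_{m+2}` -/
def ev (m : Fin 3) (b : K) : Fin 3 → K := fun i => if i = m + 1 then 1 else if i = m + 2 then b else 0

/-- concatenation -/
def cat (x y : Fin 3 → K) : Fin 6 → K := ![x 0, x 1, x 2, y 0, y 1, y 2]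

/-- basis of a plane of the second family -/
def gB (w : K) (t : B) : Fin 3 → Fin 6 → K :=
  ![cat (ev t.1.1 (dec3 w t.2.1)) 0, cat 0 (ev t.1.2 (dec3 w t.2.2.1)),
    cat (Pi.single t.1.1 1) (Pi.single t.1.2 (dec3 w t.2.2.2))]

/-- bases of all planes -/
def gen (w : K) : A ⊕ B → Fin 3 → Fin 6 → K := Sum.elim (gA w) (gB w)

/-- left half -/
def pL : (Fin 6 → K) →ₗ[K] (Fin 3 → K) where
  toFun x := ![x 0, x 1, x 2]
  map_add' x y := by ext i; fin_cases i <;> simp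
  map_smul' x y := by ext i; fin_cases i <;> simp

/-- right half -/
def pR : (Fin 6 → K) →ₗ[K] (Fin 3 → K) where
  toFun x := ![x 3, x 4, x 5]
  map_add' x y := by ext i; fin_cases i <;> simp
  map_smul' x y := by ext i; fin_cases i <;> simp

theorem pL_cat (x y : Fin 3 → K) : pL (cat x y) = x := by
  ext i; fin_cases i <;> simp [pL, cat]
theorem pR_cat (x y : Fin 3 → K) : pR (cat x y) = y := by
  ext i; fin_cases i <;> simp [pR, cat]
theorem cat_pL_pR (x : Fin 6 → K) : cat (pL x) (pR x) = x := by
  ext i; fin_cases i <;> simp [pR, pL, cat]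

theorem hf_split (x y : Fin 6 → K) : hf x y = hf (pL x) (pL y) + hf (pR x) (pR y) := by
  simp [hf, pL, pR, Fin.sum_univ_succ]; ring

theorem memA (w : K) (t : A) (x : Fin 6 → K) (hx : x ∈ Submodule.span K (Set.range (gA w t))) :
    x 3 = x 0 * dec w t.1.1.1 + x 1 * dec w t.2.1.1.1 + x 2 * dec w t.2.2.1.1 ∧
    x 4 = x 0 * dec w t.1.1.2.1 + x 1 * dec w t.2.1.1.2.1 + x 2 * dec w t.2.2.1.2.1 ∧
    x 5 = x 0 * dec w t.1.1.2.2 + x 1 * dec w t.2.1.1.2.2 + x 2 * dec w t.2.2.1.2.2 := by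
  obtain ⟨c, rfl⟩ := (Submodule.mem_span_range_iff_exists_fun K).1 hx
  simp [Fin.sum_univ_three, gA]

theorem memB (w : K) (t : B) (x : Fin 6 → K) (hx : x ∈ Submodule.span K (Set.range (gB w t))) :
    pL x (t.1.1 + 2) = dec3 w t.2.1 * pL x (t.1.1 + 1) ∧
    pR x (t.1.2 + 2) = dec3 w t.2.2.1 * pR x (t.1.2 + 1) ∧
    pR x t.1.2 = dec3 w t.2.2.2 * pL x t.1.1 := by
  obtain ⟨c, rfl⟩ := (Submodule.mem_span_range_iff_exists_fun K).1 hx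
  obtain ⟨⟨m, n⟩, b, c', d⟩ := t
  simp only [Fin.sum_univ_three, gB, map_add, map_smul, Matrix.cons_val, pL_cat, pR_cat]
  refine ⟨?_, ?_, ?_⟩
  · fin_cases m <;> simp [ev, mul_comm]
  · fin_cases n <;> simp [ev, mul_comm]
  · fin_cases m <;> fin_cases n <;> simp [ev, mul_comm]

theorem genA_fermat [CharP K 2] (w : K) (hw : w ^ 2 + w + 1 = 0) (t : A) :
    IsFermatPlane K (Submodule.span K (Set.range (gA w t))) := by
  have h2 := two_eq (K := K)
  apply isFermat_of
  · rw [Fintype.linearIndependent_iff]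
    intro c hc
    have c0 := congrFun hc 0
    have c1 := congrFun hc 1
    have c2 := congrFun hc 2
    simp [Fin.sum_univ_three, gA] at c0 c1 c2
    intro i; fin_cases i <;> simp [c0, c1, c2]
  · obtain ⟨⟨u, hu⟩, ⟨v, hv, huv⟩, ⟨z, hz, huz, hvz⟩⟩ := t
    have a1 := congrArg (dec w) hu
    have a2 := congrArg (dec w) hv
    have a3 := congrArg (dec w) huv
    have a4 := congrArg (dec w) hz
    have a5 := congrArg (dec w) huz
    have a6 := congrArg (dec w) hvz
    have sy : ∀ u v : Vec, herm u v = 0 → herm v u = 0 := by decide +kernel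
    have a7 := congrArg (dec w) (sy _ _ huv)
    have a8 := congrArg (dec w) (sy _ _ huz)
    have a9 := congrArg (dec w) (sy _ _ hvz)
    rw [dec_herm w hw] at a1 a2 a3 a4 a5 a6 a7 a8 a9
    simp only [show dec w 1 = 1 from rfl, show dec w 0 = 0 from rfl] at a1 a2 a3 a4 a5 a6 a7 a8 a9
    intro i j
    fin_cases i <;> fin_cases j <;> simp [hf, gA, Fin.sum_univ_succ] <;> grind

theorem hf_ev [CharP K 2] (m : Fin 3) (b : K) (hb : b ^ 3 = 1) : hf (ev m b) (ev m b) = 0 := by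
  have h2 := two_eq (K := K)
  fin_cases m <;> simp [hf, ev, Fin.sum_univ_three] <;> grind

theorem hf_ev_single (m : Fin 3) (b c : K) : hf (ev m b) (Pi.single m c) = 0 := by
  fin_cases m <;> simp [hf, ev, Fin.sum_univ_three]

theorem hf_single_ev (m : Fin 3) (b c : K) : hf (Pi.single m c) (ev m b) = 0 := by
  fin_cases m <;> simp [hf, ev, Fin.sum_univ_three]

theorem hf_single (m : Fin 3) (c : K) : hf (Pi.single m c : Fin 3 → K) (Pi.single m c) = c ^ 3 := by
  fin_cases m <;> simp [hf, Fin.sum_univ_three] <;> ring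

theorem hf_zero_left {n : ℕ} (x : Fin n → K) : hf 0 x = 0 := by simp [hf]
theorem hf_zero_right {n : ℕ} (x : Fin n → K) : hf x 0 = 0 := by simp [hf]

theorem genB_fermat [CharP K 2] (w : K) (hw : w ^ 2 + w + 1 = 0) (t : B) :
    IsFermatPlane K (Submodule.span K (Set.range (gB w t))) := by
  have h2 := two_eq (K := K)
  obtain ⟨⟨m, n⟩, b, c, d⟩ := t
  have hb := dec3_pow w hw b
  have hc := dec3_pow w hw c
  have hd := dec3_pow w hw d
  apply isFermat_of
  · rw [Fintype.linearIndependent_iff]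
    intro k hk
    have kL := congrArg pL hk
    have kR := congrArg pR hk
    simp only [Fin.sum_univ_three, gB, map_add, map_smul, Matrix.cons_val, pL_cat, pR_cat,
      map_zero] at kL kR
    have c0 : k 0 = 0 := by
      have := congrFun kL (m + 1)
      fin_cases m <;> simpa [ev] using this
    have c1 : k 1 = 0 := by
      have := congrFun kR (n + 1)
      fin_cases n <;> simpa [ev] using this
    have c2 : k 2 = 0 := by
      have := congrFun kL m
      fin_cases m <;> simpa [ev] using this
    intro i; fin_cases i <;> simp [c0, c1, c2]
  · intro i j
    fin_cases i <;> fin_cases j <;>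
      simp [hf_split, gB, pL_cat, pR_cat, hf_zero_left, hf_zero_right, hf_ev, hb, hc,
        hf_ev_single, hf_single_ev, hf_single, hd] <;> grind

theorem gen_fermat [CharP K 2] (w : K) (hw : w ^ 2 + w + 1 = 0) (t : A ⊕ B) :
    IsFermatPlane K (Submodule.span K (Set.range (gen w t))) := by
  cases t with
  | inl t => exact genA_fermat w hw t
  | inr t => exact genB_fermat w hw t

theorem gen_rat [CharP K 2] (w : K) (hw : w ^ 2 + w + 1 = 0) (t : A ⊕ B) (i : Fin 3) (j : Fin 6) :
    gen w t i j ^ 4 = gen w t i j := by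
  have h3 : ∀ a, dec3 w a ^ 4 = dec3 w a := fun a => by
    rw [pow_succ, dec3_pow w hw, one_mul]
  have hev : ∀ m a k, ev m (dec3 w a) k ^ 4 = ev m (dec3 w a) k := by
    intro m a k
    unfold ev
    split_ifs <;> simp [h3]
  have hs : ∀ (m k : Fin 3) (c : K), c ^ 4 = c →
      (Pi.single m c : Fin 3 → K) k ^ 4 = (Pi.single m c : Fin 3 → K) k := by
    intro m k c hc
    by_cases h : k = m
    · subst h; simpa using hc
    · simp [Pi.single_eq_of_ne h]
  cases t with
  | inl t =>
    fin_cases i <;> fin_cases j <;> simp [gen, gA, dec_pow w hw]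
  | inr t =>
    fin_cases i <;> fin_cases j <;> simp [gen, gB, cat, hev] <;> exact hs _ _ _ (by simp [h3])

/-! ### Injectivity -/

theorem ev_inj (m m' : Fin 3) (b b' : K) (hb : b ≠ 0) (hb' : b' ≠ 0)
    (h : ev m b (m' + 2) = b' * ev m b (m' + 1)) : m = m' ∧ b = b' := by
  fin_cases m <;> fin_cases m' <;> simp [ev] at h ⊢ <;> grind

theorem gen_inj [CharP K 2] (w : K) (hw : w ^ 2 + w + 1 = 0) (s t : A ⊕ B)
    (h : Submodule.span K (Set.range (gen w s)) = Submodule.span K (Set.range (gen w t))) :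
    s = t := by
  have h3 : ∀ a, dec3 w a ≠ 0 := fun a ha => by
    have := dec3_pow w hw a
    simp [ha] at this
  have hm : ∀ i, gen w s i ∈ Submodule.span K (Set.range (gen w t)) := fun i => by
    rw [← h]; exact Submodule.subset_span ⟨i, rfl⟩
  have hm' : ∀ i, gen w t i ∈ Submodule.span K (Set.range (gen w s)) := fun i => by
    rw [h]; exact Submodule.subset_span ⟨i, rfl⟩
  have excl : ∀ (a : A) (b : B), gB w b 1 ∈ Submodule.span K (Set.range (gA w a)) → False := by
    intro a b hab
    have := memA w a _ hab
    obtain ⟨⟨m, n⟩, p, q, r⟩ := b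
    fin_cases n <;> simp [gB, cat, ev] at this
  have inj := dec_inj w hw
  rcases s with s | s <;> rcases t with t | t
  · have e0 := memA w t _ (hm 0)
    have e1 := memA w t _ (hm 1)
    have e2 := memA w t _ (hm 2)
    simp [gen, gA, inj.eq_iff] at e0 e1 e2
    obtain ⟨⟨⟨u0, u1, u2⟩, hu⟩, ⟨⟨v0, v1, v2⟩, hv⟩, ⟨⟨z0, z1, z2⟩, hz⟩⟩ := s
    obtain ⟨⟨⟨u0', u1', u2'⟩, hu'⟩, ⟨⟨v0', v1', v2'⟩, hv'⟩, ⟨⟨z0', z1', z2'⟩, hz'⟩⟩ := t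
    simp only at e0 e1 e2
    obtain ⟨rfl, rfl, rfl⟩ := e0
    obtain ⟨rfl, rfl, rfl⟩ := e1
    obtain ⟨rfl, rfl, rfl⟩ := e2
    rfl
  · exact (excl s t (hm' 1)).elim
  · exact (excl t s (hm 1)).elim
  · have e0 := (memB w t _ (hm 0)).1
    have e1 := (memB w t _ (hm 1)).2.1
    have e2 := (memB w t _ (hm 2)).2.2
    obtain ⟨⟨m, n⟩, b, c, d⟩ := s
    obtain ⟨⟨m', n'⟩, b', c', d'⟩ := t
    simp only [gen, gB, Sum.elim_inr, Matrix.cons_val, pL_cat, pR_cat] at e0 e1 e2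
    obtain ⟨rfl, f0⟩ := ev_inj _ _ _ _ (h3 _) (h3 _) e0
    obtain ⟨rfl, f1⟩ := ev_inj _ _ _ _ (h3 _) (h3 _) e1
    simp at e2
    rw [dec3_inj w hw f0, dec3_inj w hw f1, dec3_inj w hw e2]

/-! ### Surjectivity -/

theorem minor_zero [CharP K 2] (u v : Fin 3 → K) (huu : hf u u = 0) (huv : hf u v = 0)
    (hvu : hf v u = 0) (hvv : hf v v = 0) :
    u 1 * v 2 = u 2 * v 1 ∧ u 2 * v 0 = u 0 * v 2 ∧ u 0 * v 1 = u 1 * v 0 := by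
  have h2 := two_eq (K := K)
  simp only [hf, Fin.sum_univ_three] at *
  generalize u 0 = a, u 1 = b, u 2 = c, v 0 = d, v 1 = e, v 2 = f at *
  obtain ⟨w0, h0⟩ : ∃ w0, w0 = b * f - c * e := ⟨_, rfl⟩
  obtain ⟨w1, h1⟩ : ∃ w1, w1 = c * d - a * f := ⟨_, rfl⟩
  obtain ⟨w3, h3⟩ : ∃ w3, w3 = a * e - b * d := ⟨_, rfl⟩
  have s0 : w0 ^ 2 = b ^ 2 * f ^ 2 + c ^ 2 * e ^ 2 := by grind
  have s1 : w1 ^ 2 = c ^ 2 * d ^ 2 + a ^ 2 * f ^ 2 := by grind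
  have s3 : w3 ^ 2 = a ^ 2 * e ^ 2 + b ^ 2 * d ^ 2 := by grind
  have u01 : a * w1 ^ 2 = b * w0 ^ 2 := by rw [s0, s1]; grind
  have u02 : a * w3 ^ 2 = c * w0 ^ 2 := by rw [s0, s3]; grind
  have u12 : b * w3 ^ 2 = c * w1 ^ 2 := by rw [s1, s3]; grind
  have v01 : d * w1 ^ 2 = e * w0 ^ 2 := by rw [s0, s1]; grind
  have v02 : d * w3 ^ 2 = f * w0 ^ 2 := by rw [s0, s3]; grind
  have v12 : e * w3 ^ 2 = f * w1 ^ 2 := by rw [s1, s3]; grind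
  have z0 : w0 ^ 5 = 0 := by
    calc w0 ^ 5 = (b * w0 ^ 2) * (f * w0 ^ 2) - (c * w0 ^ 2) * (e * w0 ^ 2) := by
          rw [show w0 ^ 5 = w0 * w0 ^ 4 by ring]; nth_rw 1 [h0]; ring
      _ = 0 := by rw [← u01, ← v02, ← u02, ← v01]; ring
  have z1 : w1 ^ 5 = 0 := by
    calc w1 ^ 5 = (c * w1 ^ 2) * (d * w1 ^ 2) - (a * w1 ^ 2) * (f * w1 ^ 2) := by
          rw [show w1 ^ 5 = w1 * w1 ^ 4 by ring]; nth_rw 1 [h1]; ring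
      _ = 0 := by rw [← u12, ← v12, u01, v01]; ring
  have z3 : w3 ^ 5 = 0 := by
    calc w3 ^ 5 = (a * w3 ^ 2) * (e * w3 ^ 2) - (b * w3 ^ 2) * (d * w3 ^ 2) := by
          rw [show w3 ^ 5 = w3 * w3 ^ 4 by ring]; nth_rw 1 [h3]; ring
      _ = 0 := by rw [u12, v12, u02, v02]; ring
  have z0 := eq_zero_of_pow_eq_zero z0
  have z1 := eq_zero_of_pow_eq_zero z1
  have z3 := eq_zero_of_pow_eq_zero z3
  refine ⟨?_, ?_, ?_⟩ <;> grind

theorem prop_of_minor (u v : Fin 3 → K) (hu : u ≠ 0)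
    (h : u 1 * v 2 = u 2 * v 1 ∧ u 2 * v 0 = u 0 * v 2 ∧ u 0 * v 1 = u 1 * v 0) :
    ∃ c : K, c • u = v := by
  obtain ⟨i, hi⟩ := Function.ne_iff.1 hu
  simp only [Pi.zero_apply] at hi
  refine ⟨v i / u i, ?_⟩
  ext j
  simp only [Pi.smul_apply, smul_eq_mul]
  rw [div_mul_eq_mul_div, div_eq_iff hi]
  obtain ⟨h0, h1, h3⟩ := h
  fin_cases i <;> fin_cases j <;> simp <;> grind

/-- an isotropic vector over `K` with extra conditions is a multiple of some `ev m b` -/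
theorem ev_of [CharP K 2] (x : Fin 3 → K) (hx : x ≠ 0) (h : hf x x = 0)
    (hq : ∀ v : Fin 3 → K, hf x v = 0 → hf v x = 0) :
    ∃ (m : Fin 3) (b c : K), b ^ 3 = 1 ∧ c • x = ev m b := by
  have h2 := two_eq (K := K)
  have q0 := hq ![0, x 2 ^ 2, - x 1 ^ 2] (by simp [hf, Fin.sum_univ_three]; ring)
  have q1 := hq ![x 2 ^ 2, 0, - x 0 ^ 2] (by simp [hf, Fin.sum_univ_three]; ring)
  have q3 := hq ![x 1 ^ 2, - x 0 ^ 2, 0] (by simp [hf, Fin.sum_univ_three]; ring)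
  simp [hf, Fin.sum_univ_three] at q0 q1 q3 h
  have hprod : x 0 * (x 1 * x 2 ^ 4) = 0 := by grind
  have main : ∀ m : Fin 3, x m = 0 → x (m + 1) ^ 3 + x (m + 2) ^ 3 = 0 →
      ∃ (m : Fin 3) (b c : K), b ^ 3 = 1 ∧ c • x = ev m b := by
    intro m h0 h1
    have hne : x (m + 1) ≠ 0 := by
      intro h3
      rw [h3] at h1
      have h4 : x (m + 2) = 0 := by
        apply eq_zero_of_pow_eq_zero (n := 3); simpa using h1
      apply hx
      ext i
      fin_cases m <;> fin_cases i <;> simp at * <;> assumption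
    refine ⟨m, x (m + 2) / x (m + 1), (x (m + 1))⁻¹, ?_, ?_⟩
    · rw [div_pow, div_eq_one_iff_eq (pow_ne_zero _ hne)]; grind
    · ext i
      fin_cases m <;> fin_cases i <;> simp [ev] at * <;> field_simp <;> simp [*]
  rcases mul_eq_zero.1 hprod with h0 | h0
  · exact main 0 h0 (by simp; grind)
  rcases mul_eq_zero.1 h0 with h0 | h0
  · exact main 1 h0 (by simp; grind)
  · have h0 := eq_zero_of_pow_eq_zero h0
    exact main 2 h0 (by simp; grind)

/-- `hf x` as a linear map -/
def hfl (x : Fin 3 → K) : (Fin 3 → K) →ₗ[K] K where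
  toFun := hf x
  map_add' u v := by simp [hf, mul_add, Finset.sum_add_distrib]
  map_smul' c v := by simp [hf, Finset.mul_sum, mul_left_comm]

theorem half [CharP K 2] (w : K) (hw : w ^ 2 + w + 1 = 0) {P : Submodule K (Fin 6 → K)}
    (hP : IsFermatPlane K P) (p r : (Fin 6 → K) →ₗ[K] (Fin 3 → K))
    (hs : ∀ x y, hf x y = hf (p x) (p y) + hf (r x) (r y))
    (hi : ∀ x, p x = 0 → r x = 0 → x = 0)
    (hx : ∃ x ∈ P, x ≠ 0 ∧ p x = 0) :
    (∃ y ∈ P, y ≠ 0 ∧ r y = 0) ∧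
      ∃ (m : Fin 3) (b : K), b ^ 3 = 1 ∧ ∃ x ∈ P, p x = 0 ∧ r x = ev m b := by
  obtain ⟨x, hxP, hx0, hpx⟩ := hx
  have hrx : r x ≠ 0 := fun h => hx0 (hi x hpx h)
  have hpol : ∀ x ∈ P, ∀ y ∈ P, hf (p x) (p y) + hf (r x) (r y) = 0 := fun x hx y hy => by
    rw [← hs]; exact polar w hw hP hx hy
  let f : P →ₗ[K] (Fin 3 → K) := r.domRestrict P
  have hf1 : Module.finrank K (LinearMap.ker f) ≤ 1 := by
    by_cases hb : LinearMap.ker f = ⊥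
    · rw [hb]; simp
    obtain ⟨u, hu, hu0⟩ := Submodule.exists_mem_ne_zero_of_ne_bot hb
    have hru : r u.1 = 0 := hu
    have hpu : p u.1 ≠ 0 := fun h => hu0 (Subtype.ext (hi u.1 h hru))
    refine finrank_le_one (⟨u, hu⟩ : LinearMap.ker f) ?_
    rintro ⟨v, hv⟩
    have hrv : r v.1 = 0 := hv
    have e1 := hpol u.1 u.2 u.1 u.2
    have e2 := hpol u.1 u.2 v.1 v.2
    have e3 := hpol v.1 v.2 u.1 u.2
    have e4 := hpol v.1 v.2 v.1 v.2
    simp only [hru, hrv, hf_zero_left, add_zero] at e1 e2 e3 e4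
    obtain ⟨c, hc⟩ := prop_of_minor _ _ hpu (minor_zero _ _ e1 e2 e3 e4)
    refine ⟨c, ?_⟩
    apply Subtype.ext
    apply Subtype.ext
    apply sub_eq_zero.1
    apply hi
    · simp [hc]
    · simp [hru, hrv]
  have hrk := LinearMap.finrank_range_add_finrank_ker f
  rw [hP.1] at hrk
  have hle : LinearMap.range f ≤ LinearMap.ker (hfl (r x)) := by
    rintro _ ⟨y, rfl⟩
    have := hpol x hxP y.1 y.2
    rw [hpx, hf_zero_left, zero_add] at this
    exact this
  have hk2 : Module.finrank K (LinearMap.ker (hfl (r x))) ≤ 2 := by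
    have hlt : LinearMap.ker (hfl (r x)) < ⊤ := by
      rw [lt_top_iff_ne_top]
      intro ht
      apply hrx
      ext i
      have : Pi.single i 1 ∈ LinearMap.ker (hfl (r x)) := by rw [ht]; trivial
      have h' : hf (r x) (Pi.single i 1) = 0 := this
      simpa [hf, Pi.single_apply] using h'
    have := Submodule.finrank_lt hlt.ne
    simp at this
    omega
  have hle2 := Submodule.finrank_mono hle
  have heq : LinearMap.range f = LinearMap.ker (hfl (r x)) :=
    Submodule.eq_of_le_of_finrank_eq hle (by omega)
  constructor
  · have : LinearMap.ker f ≠ ⊥ := by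
      intro h
      rw [h] at hrk
      simp at hrk
      omega
    obtain ⟨u, hu, hu0⟩ := Submodule.exists_mem_ne_zero_of_ne_bot this
    exact ⟨u.1, u.2, fun h => hu0 (Subtype.ext h), hu⟩
  · obtain ⟨m, b, c, hb, hc⟩ := ev_of (r x) hrx
      (by simpa [hpx, hf_zero_left] using hpol x hxP x hxP) (by
        intro v hv
        have : v ∈ LinearMap.range f := by rw [heq]; exact hv
        obtain ⟨y, rfl⟩ := this
        have := hpol y.1 y.2 x hxP
        rw [hpx, hf_zero_right, zero_add] at this
        exact this)
    exact ⟨m, b, hb, c • x, P.smul_mem _ hxP, by simp [hpx], by simp [hc]⟩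

theorem eq_of_gen [CharP K 2] (w : K) (hw : w ^ 2 + w + 1 = 0) {P : Submodule K (Fin 6 → K)}
    (hP : IsFermatPlane K P) (t : A ⊕ B) (h : ∀ i, gen w t i ∈ P) :
    Submodule.span K (Set.range (gen w t)) = P := by
  apply Submodule.eq_of_le_of_finrank_eq
  · rw [Submodule.span_le]
    rintro _ ⟨i, rfl⟩
    exact h i
  · rw [hP.1, (gen_fermat w hw t).1]

theorem pow4_of_unitary [CharP K 2] (M : Matrix (Fin 3) (Fin 3) K)
    (h : M.map (frobenius K 2) * M.transpose = 1) (i j : Fin 3) : M i j ^ 4 = M i j := by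
  have h1 : M.transpose * M.map (frobenius K 2) = 1 := mul_eq_one_comm.1 h
  have h3 := congrArg Matrix.transpose h1
  rw [Matrix.transpose_mul, Matrix.transpose_transpose, Matrix.transpose_one] at h3
  have h4 := congrArg (fun N => N.map (frobenius K 2)) h
  simp only [Matrix.map_mul] at h4
  rw [Matrix.map_one _ (map_zero _) (map_one _), Matrix.transpose_map] at h4
  have h5 : (M.map (frobenius K 2)).map (frobenius K 2) = M := by
    calc _ = (M.map (frobenius K 2)).map (frobenius K 2)
          * ((M.map (frobenius K 2)).transpose * M) := by rw [h3, mul_one]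
      _ = M := by rw [← mul_assoc, h4, one_mul]
  have h6 := congrFun (congrFun h5 i) j
  simp only [Matrix.map_apply, frobenius_def] at h6
  rw [← pow_mul] at h6
  exact h6

theorem gen_surj [CharP K 2] (w : K) (hw : w ^ 2 + w + 1 = 0) {P : Submodule K (Fin 6 → K)}
    (hP : IsFermatPlane K P) : ∃ t, Submodule.span K (Set.range (gen w t)) = P := by
  have h2 := two_eq (K := K)
  have hiL : ∀ x : Fin 6 → K, pL x = 0 → pR x = 0 → x = 0 := by
    intro x h1 h3
    rw [← cat_pL_pR x, h1, h3]
    ext i; fin_cases i <;> simp [cat]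
  by_cases hx : ∃ x ∈ P, x ≠ 0 ∧ pL x = 0
  · obtain ⟨hy, n, c, hc, x, hxP, hxL, hxR⟩ := half w hw hP pL pR hf_split hiL hx
    obtain ⟨-, m, b, hb, y, hyP, hyR, hyL⟩ := half w hw hP pR pL
      (fun x y => by rw [hf_split, add_comm]) (fun x h1 h3 => hiL x h3 h1) hy
    let f : P →ₗ[K] (Fin 2 → K) :=
      { toFun := fun z => ![pL z.1 (m + 1), pR z.1 (n + 1)]
        map_add' := fun z z' => by ext i; fin_cases i <;> simp
        map_smul' := fun z z' => by ext i; fin_cases i <;> simp }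
    have hker : LinearMap.ker f ≠ ⊥ := LinearMap.ker_ne_bot_of_finrank_lt (by
      rw [hP.1]; simp)
    obtain ⟨z, hz, hz0⟩ := Submodule.exists_mem_ne_zero_of_ne_bot hker
    have hzL : pL z.1 (m + 1) = 0 := congrFun hz 0
    have hzR : pR z.1 (n + 1) = 0 := congrFun hz 1
    have hb0 : b ≠ 0 := by rintro rfl; simp at hb
    have hc0 : c ≠ 0 := by rintro rfl; simp at hc
    have aux : ∀ (m : Fin 3) (b : K) (v : Fin 3 → K), b ≠ 0 → v (m + 1) = 0 → hf (ev m b) v = 0 →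
        v = Pi.single m (v m) := by
      intro m b v hb hv h
      ext i
      fin_cases m <;> fin_cases i <;> simp [hf, ev, Fin.sum_univ_three] at * <;> simp_all
    have eL : pL z.1 = Pi.single m (pL z.1 m) := by
      apply aux m b _ hb0 hzL
      have := polar w hw hP hyP z.2
      rwa [hf_split, hyR, hf_zero_left, add_zero, hyL] at this
    have eR : pR z.1 = Pi.single n (pR z.1 n) := by
      apply aux n c _ hc0 hzR
      have := polar w hw hP hxP z.2
      rwa [hf_split, hxL, hf_zero_left, zero_add, hxR] at this
    have ez := polar w hw hP z.2 z.2
    rw [hf_split, eL, eR, hf_single, hf_single] at ez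
    have hne : pL z.1 m ≠ 0 := by
      intro h0
      rw [h0] at ez eL
      have h1 : pR z.1 n = 0 := by
        apply eq_zero_of_pow_eq_zero (n := 3); simpa using ez
      rw [h1] at eR
      exact hz0 (Subtype.ext (hiL z.1 (by rw [eL]; simp) (by rw [eR]; simp)))
    have hd : (pR z.1 n / pL z.1 m) ^ 3 = 1 := by
      rw [div_pow, div_eq_one_iff_eq (pow_ne_zero _ hne)]; grind
    obtain ⟨b', hb'⟩ := dec3_surj w hw _ hb
    obtain ⟨c', hc'⟩ := dec3_surj w hw _ hc
    obtain ⟨d', hd'⟩ := dec3_surj w hw _ hd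
    refine ⟨Sum.inr ((m, n), (b', c', d')), eq_of_gen w hw hP _ ?_⟩
    have m0 : gen w (Sum.inr ((m, n), (b', c', d'))) 0 = y := by
      rw [← cat_pL_pR y, hyL, hyR, ← hb']; rfl
    have m1 : gen w (Sum.inr ((m, n), (b', c', d'))) 1 = x := by
      rw [← cat_pL_pR x, hxL, hxR, ← hc']; rfl
    have m2 : gen w (Sum.inr ((m, n), (b', c', d'))) 2 = (pL z.1 m)⁻¹ • z.1 := by
      rw [← cat_pL_pR ((pL z.1 m)⁻¹ • z.1), map_smul, map_smul]
      have l1 : (pL z.1 m)⁻¹ • pL z.1 = Pi.single m 1 := by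
        conv_lhs => arg 2; rw [eL]
        rw [← Pi.single_smul, smul_eq_mul, inv_mul_cancel₀ hne]
      have l2 : (pL z.1 m)⁻¹ • pR z.1 = Pi.single n (dec3 w d') := by
        conv_lhs => arg 2; rw [eR]
        rw [← Pi.single_smul, smul_eq_mul, hd', div_eq_inv_mul]
      rw [l1, l2]; rfl
    intro i
    fin_cases i
    · exact m0 ▸ hyP
    · exact m1 ▸ hxP
    · exact m2 ▸ P.smul_mem _ z.2
  · push Not at hx
    have hinj : Function.Injective (pL.domRestrict P) := by
      rw [← LinearMap.ker_eq_bot, LinearMap.ker_eq_bot']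
      intro z hz
      by_contra h0
      exact hx z.1 z.2 (fun h => h0 (Subtype.ext h)) hz
    have hsur : Function.Surjective (pL.domRestrict P) :=
      (LinearMap.injective_iff_surjective_of_finrank_eq_finrank (by rw [hP.1]; simp)).1 hinj
    choose g hg using fun i : Fin 3 => hsur (Pi.single i 1)
    have hg' : ∀ i, pL (g i).1 = Pi.single i 1 := hg
    let M : Matrix (Fin 3) (Fin 3) K := fun i => pR (g i).1
    have hM : ∀ i j, hf (M i) (M j) = if i = j then 1 else 0 := by
      intro i j
      have := polar w hw hP (g i).2 (g j).2
      rw [hf_split, hg', hg'] at this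
      have e : hf (Pi.single i 1 : Fin 3 → K) (Pi.single j 1) = if i = j then 1 else 0 := by
        simp [hf, Pi.single_apply, eq_comm]
      rw [e] at this
      change hf (pR (g i).1) (pR (g j).1) = _
      grind
    have h4 := pow4_of_unitary M (by
      ext i j
      have := hM i j
      rw [Matrix.mul_apply, Matrix.one_apply, ← this]
      simp [hf, frobenius_def])
    choose k hk using fun i j => dec_surj w hw _ (h4 i j)
    have hkh : ∀ i j, herm (k i 0, k i 1, k i 2) (k j 0, k j 1, k j 2) = if i = j then 1 else 0 := by
      intro i j
      apply dec_inj w hw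
      rw [dec_herm w hw]
      simp only [hk]
      have := hM i j
      simp only [hf, Fin.sum_univ_three] at this
      rw [this]
      split_ifs <;> rfl
    let t : A := ⟨⟨(k 0 0, k 0 1, k 0 2), hkh 0 0⟩, ⟨(k 1 0, k 1 1, k 1 2), hkh 1 1, hkh 0 1⟩,
      ⟨(k 2 0, k 2 1, k 2 2), hkh 2 2, hkh 0 2, hkh 1 2⟩⟩
    refine ⟨Sum.inl t, eq_of_gen w hw hP _ ?_⟩
    have hgen : ∀ i, gen w (Sum.inl t) i = (g i).1 := by
      intro i
      rw [← cat_pL_pR (g i).1, hg']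
      change gA w t i = cat _ (M i)
      ext j
      fin_cases i <;> fin_cases j <;> simp [gA, cat, t, hk]
    intro i
    rw [hgen]
    exact (g i).2

end FermatPlanes

/-- the Fermat cubic fourfold over an algebraically closed field
of characteristic 2 contains exactly 891 planes, and each of them is defined
over `F₄` (is spanned by vectors all of whose coordinates `a` satisfy
`a⁴ = a`). -/
theorem fermat_planes_card_and_rationality (K : Type*) [Field K]
    [IsAlgClosed K] [CharP K 2] :
    Nat.card {P : Submodule K (Fin 6 → K) // IsFermatPlane K P} = 891 ∧
    ∀ P : Submodule K (Fin 6 → K), IsFermatPlane K P →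
      ∃ S : Set (Fin 6 → K), (∀ v ∈ S, ∀ j, (v j) ^ 4 = v j) ∧
        P = Submodule.span K S := by
  obtain ⟨w, hw⟩ : ∃ w : K, w ^ 2 + w + 1 = 0 := by
    have hd : (Polynomial.X ^ 2 + Polynomial.X + 1 : Polynomial K).degree = 2 := by
      compute_degree!
    obtain ⟨w, hw⟩ := IsAlgClosed.exists_root (Polynomial.X ^ 2 + Polynomial.X + 1 : Polynomial K)
      (by rw [hd]; decide)
    exact ⟨w, by simpa using hw⟩
  constructor
  · rw [← FermatPlanes.card_AB]
    symm
    apply Nat.card_eq_of_bijective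
      (fun t => ⟨Submodule.span K (Set.range (FermatPlanes.gen w t)),
        FermatPlanes.gen_fermat w hw t⟩)
    constructor
    · intro s t h
      exact FermatPlanes.gen_inj w hw s t (congrArg Subtype.val h)
    · rintro ⟨P, hP⟩
      obtain ⟨t, ht⟩ := FermatPlanes.gen_surj w hw hP
      exact ⟨t, Subtype.ext ht⟩
  · intro P hP
    obtain ⟨t, ht⟩ := FermatPlanes.gen_surj w hw hP
    refine ⟨_, ?_, ht.symm⟩
    rintro _ ⟨i, rfl⟩ j
    exact FermatPlanes.gen_rat w hw t i j
end

section
/- Let A = (0^{21}, 4, 0, −4) and B = (0^{21}, 0, 4, −4) be the indicated vectors of the Leech lattice Λ₂₄ (with inner product (x₁y₁+⋯+x₂₄y₂₄)/8). Then the set T_{AB} = {T ∈ Λ₂₄ : ⟨T,T⟩ = ⟨T−A,T−A⟩ = ⟨T−B,T−B⟩ = 4} has exactly 891 elements. -/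
open scoped BigOperators

/-- A generator matrix of the extended binary Golay code (MOG coordinates). -/
def golayMatrix : Matrix (Fin 12) (Fin 24) (ZMod 2) :=
  !![0, 0, 0, 0, 0, 0, 0, 0, 0, 0, 0, 0, 0, 0, 0, 0, 1, 1, 1, 1, 1, 1, 1, 1;
    0, 0, 0, 0, 0, 0, 0, 0, 0, 0, 0, 0, 1, 1, 1, 1, 0, 0, 0, 0, 1, 1, 1, 1;
    0, 0, 0, 0, 0, 0, 0, 0, 0, 0, 1, 1, 0, 0, 1, 1, 0, 0, 1, 1, 0, 0, 1, 1;
    0, 0, 0, 0, 0, 0, 0, 0, 0, 1, 0, 1, 0, 1, 0, 1, 0, 1, 0, 1, 0, 1, 0, 1;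
    0, 0, 0, 0, 0, 0, 0, 0, 1, 0, 0, 1, 0, 1, 1, 0, 0, 1, 1, 0, 1, 0, 0, 1;
    0, 0, 0, 0, 0, 0, 1, 1, 0, 0, 0, 0, 0, 0, 1, 1, 0, 1, 1, 0, 0, 1, 0, 1;
    0, 0, 0, 0, 0, 1, 0, 1, 0, 0, 0, 0, 0, 1, 0, 1, 0, 0, 1, 1, 0, 1, 1, 0;
    0, 0, 0, 0, 1, 0, 0, 1, 0, 0, 0, 0, 0, 1, 1, 0, 0, 1, 0, 1, 1, 1, 0, 0;
    0, 0, 0, 1, 0, 0, 0, 1, 0, 0, 0, 1, 0, 0, 0, 1, 0, 1, 1, 1, 1, 0, 0, 0;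
    0, 0, 1, 0, 0, 0, 0, 1, 0, 0, 0, 1, 0, 0, 1, 0, 0, 0, 1, 0, 1, 1, 1, 0;
    0, 1, 0, 0, 0, 0, 0, 1, 0, 0, 0, 1, 0, 1, 0, 0, 0, 0, 0, 1, 1, 0, 1, 1;
    1, 0, 0, 0, 0, 0, 0, 1, 0, 0, 0, 1, 0, 1, 1, 1, 0, 1, 0, 0, 0, 0, 1, 0]

/-- The extended binary Golay code `C₂₄`. -/
def GolayCode : Submodule (ZMod 2) (Fin 24 → ZMod 2) :=
  Submodule.span (ZMod 2) (Set.range fun i => golayMatrix i)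

/-- Membership in the Leech lattice `Λ₂₄ ⊂ ℤ²⁴` (coordinates scaled by `√8`),
via the standard congruence characterization. -/
def IsLeech (x : Fin 24 → ℤ) : Prop :=
  ∃ m : ℤ, (m = 0 ∨ m = 1) ∧ (∀ i, (2:ℤ) ∣ (x i - m)) ∧
    ((fun i => if (4:ℤ) ∣ (x i - m - 2) then (1 : ZMod 2) else 0) ∈ GolayCode) ∧
    (8:ℤ) ∣ ((∑ i, x i) - 4 * m)

/-- The inner product `⟨x, y⟩ = (Σ xᵢ yᵢ)/8` on the Leech lattice. -/
def leechInner (x y : Fin 24 → ℤ) : ℚ := (∑ i, (x i : ℚ) * (y i : ℚ)) / 8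

/-- The lattice point `A = (0²¹, 4, 0, −4)`. -/
def vA : Fin 24 → ℤ := fun i => if i.val = 21 then 4 else if i.val = 23 then -4 else 0

/-- The lattice point `B = (0²¹, 0, 4, −4)`. -/
def vB : Fin 24 → ℤ := fun i => if i.val = 22 then 4 else if i.val = 23 then -4 else 0

/-- `T_AB`: lattice points `T` with `|OT| = |AT| = |BT| = 2`. -/
def TAB : Set (Fin 24 → ℤ) :=
  {T | IsLeech T ∧ leechInner T T = 4 ∧
       leechInner (T - vA) (T - vA) = 4 ∧ leechInner (T - vB) (T - vB) = 4}


/-- bit of a natural number, as a natural number -/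
def bt (w i : ℕ) : ℕ := (w.testBit i).toNat

/-- the vector of bits of `w` -/
def bits (w : ℕ) : Fin 24 → ZMod 2 := fun i => if w.testBit i then 1 else 0

/-- the rows of the generator matrix as binary numbers -/
def rowsN : List ℕ := [16711680, 15790080, 13421568, 11184640, 9857280, 10928320, 7119008, 3825808, 2001032, 7620740, 14166146, 4384897]

/-- weight of a word -/
def pop (w : ℕ) : ℕ :=
  bt w 0 + bt w 1 + bt w 2 + bt w 3 + bt w 4 + bt w 5 + bt w 6 + bt w 7 + bt w 8 + bt w 9 + bt w 10 + bt w 11 + bt w 12 + bt w 13 + bt w 14 + bt w 15 + bt w 16 + bt w 17 + bt w 18 + bt w 19 + bt w 20 + bt w 21 + bt w 22 + bt w 23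

lemma pop_eq (w : ℕ) : pop w = ∑ i : Fin 24, bt w i := by
  simp only [Fin.sum_univ_castSucc, Finset.univ_eq_empty, Finset.sum_empty, zero_add]
  rfl

/-- adjoin a generator -/
def adj (acc : List ℕ) (r : ℕ) : List ℕ := acc ++ acc.map (fun w => w ^^^ r)

/-- all codewords -/
def words : List ℕ := rowsN.foldl adj [0]

lemma bits_xor (a b : ℕ) : bits (a ^^^ b) = bits a + bits b := by
  funext i
  simp only [bits, Nat.testBit_xor, Pi.add_apply]
  cases a.testBit i <;> cases b.testBit i <;> decide

lemma bits_zero : bits 0 = 0 := by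
  funext i
  simp [bits]

lemma golay_rows : ∀ i : Fin 12, golayMatrix i = bits (rowsN.getD i 0) := by
  have h : ∀ (i : Fin 12) (j : Fin 24), golayMatrix i j = bits (rowsN.getD i 0) j := by
    intro i j
    have h2 : ∀ (i : Fin 12) (j : Fin 24),
      decide ((golayMatrix i j : ZMod 2) = bits (rowsN.getD i 0) j) = true := by decide +kernel
    exact of_decide_eq_true (h2 i j)
  intro i
  exact funext (h i)

/-- being the bit vector of a word in the list -/
def InL (acc : List ℕ) (c : Fin 24 → ZMod 2) : Prop := ∃ w ∈ acc, c = bits w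

lemma InL_step {acc : List ℕ} {c : Fin 24 → ZMod 2} (h : InL acc c) (r : ℕ) (u : ZMod 2) :
    InL (adj acc r) (c + u • bits r) := by
  obtain ⟨w, hw, rfl⟩ := h
  have hu : u = 0 ∨ u = 1 := by revert u; decide
  rcases hu with rfl | rfl
  · exact ⟨w, by simp [adj, hw], by simp⟩
  · refine ⟨w ^^^ r, ?_, by simp [bits_xor]⟩
    simp only [adj, List.mem_append, List.mem_map]
    exact Or.inr ⟨w, hw, rfl⟩

lemma golay_words {c : Fin 24 → ZMod 2} (h : c ∈ GolayCode) : ∃ w ∈ words, c = bits w := by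
  unfold GolayCode at h
  rw [Submodule.mem_span_range_iff_exists_fun] at h
  obtain ⟨u, rfl⟩ := h
  simp only [golay_rows]
  have h0 : InL [0] 0 := ⟨0, by simp, bits_zero.symm⟩
  have := InL_step (InL_step (InL_step (InL_step (InL_step (InL_step (InL_step (InL_step (InL_step
    (InL_step (InL_step (InL_step h0
      (rowsN.getD 0 0) (u 0)) (rowsN.getD 1 0) (u 1)) (rowsN.getD 2 0) (u 2))
      (rowsN.getD 3 0) (u 3)) (rowsN.getD 4 0) (u 4)) (rowsN.getD 5 0) (u 5))
      (rowsN.getD 6 0) (u 6)) (rowsN.getD 7 0) (u 7)) (rowsN.getD 8 0) (u 8))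
      (rowsN.getD 9 0) (u 9)) (rowsN.getD 10 0) (u 10)) (rowsN.getD 11 0) (u 11)
  convert this using 1
  simp only [Fin.sum_univ_castSucc, Finset.univ_eq_empty, Finset.sum_empty]
  rfl

lemma bits_row_mem (r : ℕ) (h : r ∈ rowsN) : bits r ∈ GolayCode := by
  have : ∃ i : Fin 12, r = rowsN.getD i 0 := by
    revert r
    decide +kernel
  obtain ⟨i, rfl⟩ := this
  rw [← golay_rows]
  exact Submodule.subset_span ⟨i, rfl⟩

/-- pivot column and row -/
def pairs : List (ℕ × ℕ) := [(16, 16711680), (12, 15790080), (10, 13421568), (9, 11184640), (8, 9857280), (6, 10928320), (5, 7119008), (4, 3825808), (3, 2001032), (2, 7620740), (1, 14166146), (0, 4384897)]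

/-- re-encoding of the information bits given by `p` -/
def reenc (p : ℕ → Bool) : ℕ :=
  pairs.foldr (fun q acc => if p q.1 then acc ^^^ q.2 else acc) 0

lemma reenc_mem (p : ℕ → Bool) : bits (reenc p) ∈ GolayCode := by
  have hp : ∀ q ∈ pairs, q.2 ∈ rowsN := by decide
  unfold reenc
  generalize pairs = l at hp
  induction l with
  | nil => simp [bits_zero]
  | cons q l ih =>
    have ih := ih (fun q hq => hp q (List.mem_cons_of_mem _ hq))
    rw [List.foldr_cons]
    split
    · rw [bits_xor]
      exact Submodule.add_mem _ ih (bits_row_mem _ (hp q List.mem_cons_self))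
    · exact ih

/-- list of values on `0, ..., 23` -/
def mk {α : Type} (f : ℕ → α) : List α := (List.range 24).map f

lemma ofFn_mk {α : Type} (T : Fin 24 → α) (f : ℕ → α) (h : ∀ i : Fin 24, T i = f i) :
    List.ofFn T = mk f := by
  have : T = fun i : Fin 24 => f i := funext h
  rw [this]
  rfl

def L0 : List (List ℤ) := [mk fun i => if i = 21 ∨ i = 22 then 4 else 0]

def L1 : List (List ℤ) := (List.range 21).flatMap fun i => [4, -4].map fun s =>
  mk fun j => if j = i then s else if j = 23 then -4 else 0

/-- octads through the last three points -/
def octads : List ℕ :=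
  words.filter fun w => w.testBit 21 && w.testBit 22 && w.testBit 23 && Nat.beq (pop w) 8

def choices (w : ℕ) : List (List ℤ) := mk fun i =>
  if i = 21 ∨ i = 22 then [2] else if i = 23 then [-2] else
    if w.testBit i then [2, -2] else [0]

def L2 : List (List ℤ) := octads.flatMap fun w =>
  (List.sections (choices w)).filter fun l => l.sum % 8 = 0

def L3 : List (List ℤ) :=
  (words.filter fun w => !(w.testBit 21) && !(w.testBit 22) && !(w.testBit 23)).map fun w =>
    mk fun i => if i = 23 then -3 else if w.testBit i then -1 else 1

def LL : List (List ℤ) := L0 ++ L1 ++ L2 ++ L3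

/-- numeric key of a list -/
def key (l : List ℤ) : ℕ := l.foldr (fun x acc => 16 * acc + (x + 8).toNat) 0

/-- duplicate-freeness test with a bit set `acc` of values already seen -/
def nodupB : ℕ → List ℕ → Bool
  | _, [] => true
  | acc, a :: l => !(acc.testBit a) && nodupB (acc ||| 2 ^ a) l

lemma nodupB_spec : ∀ (l : List ℕ) (acc : ℕ), nodupB acc l = true →
    l.Nodup ∧ ∀ a ∈ l, acc.testBit a = false
  | [], _, _ => ⟨List.nodup_nil, by simp⟩
  | a :: l, acc, h => by
    simp only [nodupB, Bool.and_eq_true, Bool.not_eq_true'] at h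
    obtain ⟨h1, h2⟩ := nodupB_spec l _ h.2
    simp only [Nat.testBit_or, Bool.or_eq_false_iff] at h2
    refine ⟨List.nodup_cons.2 ⟨fun ha => ?_, h1⟩, ?_⟩
    · have := (h2 a ha).2
      simp at this
    · intro b hb
      rcases List.mem_cons.1 hb with rfl | hb
      · exact h.1
      · exact (h2 b hb).1

lemma LL_nodup : LL.Nodup := by
  apply List.Nodup.of_map (fun l => key l % 37382)
  refine (nodupB_spec _ 0 ?_).1
  decide +kernel

lemma LL_length : LL.length = 891 := by decide +kernel

lemma words_wt_all : (words.all fun w => Nat.beq w 0 || Nat.ble 8 (pop w)) = true := by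
  decide +kernel

lemma words_wt : ∀ w ∈ words, w = 0 ∨ 8 ≤ pop w := by
  intro w hw
  have h := List.all_eq_true.1 words_wt_all w hw
  rw [Bool.or_eq_true] at h
  rcases h with h | h
  · exact Or.inl (Nat.eq_of_beq_eq_true h)
  · exact Or.inr (Nat.le_of_ble_eq_true h)

/-- the computable check of the defining conditions -/
def chk (l : List ℤ) : Prop :=
  let m := l.headD 0 % 2
  let w := reenc (fun i => (l.getD i 0 - m - 2) % 4 = 0)
  l.length = 24 ∧ (∀ i < 24, (l.getD i 0 - m) % 2 = 0) ∧
  (∀ i < 24, w.testBit i = decide ((l.getD i 0 - m - 2) % 4 = 0)) ∧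
  (l.sum - 4 * m) % 8 = 0 ∧ (l.map fun x => x * x).sum = 32 ∧
  l.getD 21 0 - l.getD 23 0 = 4 ∧ l.getD 22 0 - l.getD 23 0 = 4

instance (l : List ℤ) : Decidable (chk l) := by unfold chk; infer_instance

lemma LL_chk : ∀ l ∈ LL, chk l := by decide +kernel

lemma sum_split (g : Fin 24 → ℤ) : ∑ i, g i =
    ∑ i : Fin 21, g (Fin.castLE (by norm_num) i) + g 21 + g 22 + g 23 := by
  rw [Fin.sum_univ_castSucc, Fin.sum_univ_castSucc, Fin.sum_univ_castSucc]
  rfl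

lemma inner_iff (T : Fin 24 → ℤ) :
    (leechInner T T = 4 ∧ leechInner (T - vA) (T - vA) = 4 ∧ leechInner (T - vB) (T - vB) = 4) ↔
    (∑ i, T i * T i = 32 ∧ T 21 - T 23 = 4 ∧ T 22 - T 23 = 4) := by
  have hq : ∀ S : Fin 24 → ℤ, leechInner S S = 4 ↔ ∑ i, S i * S i = 32 := by
    intro S
    unfold leechInner
    rw [div_eq_iff (by norm_num)]
    norm_num
    exact_mod_cast Iff.rfl
  have hA : ∑ i, (T - vA) i * (T - vA) i = ∑ i, T i * T i - 8 * (T 21 - T 23) + 32 := by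
    have : ∑ i : Fin 21, (T - vA) (Fin.castLE (by norm_num) i) * (T - vA) (Fin.castLE (by norm_num) i)
      = ∑ i : Fin 21, T (Fin.castLE (by norm_num) i) * T (Fin.castLE (by norm_num) i) := by
      refine Finset.sum_congr rfl fun i _ => ?_
      have h : vA (Fin.castLE (by norm_num) i) = 0 := by revert i; decide
      simp [h]
    rw [sum_split, this, sum_split (fun i => T i * T i)]
    simp only [Pi.sub_apply, show vA 21 = 4 from rfl, show vA 22 = 0 from rfl,
      show vA 23 = -4 from rfl]
    ring
  have hB : ∑ i, (T - vB) i * (T - vB) i = ∑ i, T i * T i - 8 * (T 22 - T 23) + 32 := by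
    have : ∑ i : Fin 21, (T - vB) (Fin.castLE (by norm_num) i) * (T - vB) (Fin.castLE (by norm_num) i)
      = ∑ i : Fin 21, T (Fin.castLE (by norm_num) i) * T (Fin.castLE (by norm_num) i) := by
      refine Finset.sum_congr rfl fun i _ => ?_
      have h : vB (Fin.castLE (by norm_num) i) = 0 := by revert i; decide
      simp [h]
    rw [sum_split, this, sum_split (fun i => T i * T i)]
    simp only [Pi.sub_apply, show vB 21 = 0 from rfl, show vB 22 = 4 from rfl,
      show vB 23 = -4 from rfl]
    ring
  rw [hq, hq, hq, hA, hB]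
  constructor
  · rintro ⟨h1, h2, h3⟩
    exact ⟨h1, by omega, by omega⟩
  · rintro ⟨h1, h2, h3⟩
    exact ⟨h1, by omega, by omega⟩

lemma getD_ofFn (T : Fin 24 → ℤ) (i : Fin 24) : (List.ofFn T).getD i 0 = T i := by
  rw [List.getD_eq_getElem _ _ (by rw [List.length_ofFn]; exact i.2), List.getElem_ofFn]

lemma mem_of_chk (T : Fin 24 → ℤ) (h : chk (List.ofFn T)) : T ∈ TAB := by
  obtain ⟨-, h1, h2, h3, h4, h5, h6⟩ := h
  have hh : (List.ofFn T).headD 0 = T 0 := by simp [List.ofFn_succ]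
  rw [hh] at h1 h2 h3
  refine ⟨⟨T 0 % 2, by omega, ?_, ?_, ?_⟩, (inner_iff T).2 ⟨?_, ?_, ?_⟩⟩
  · intro i
    have := h1 i i.2
    rw [getD_ofFn] at this
    exact Int.dvd_of_emod_eq_zero this
  · convert reenc_mem _ using 1
    rotate_left
    · exact fun i => ((List.ofFn T).getD i 0 - T 0 % 2 - 2) % 4 = 0
    funext i
    have := h2 i i.2
    simp only [bits, this, getD_ofFn, decide_eq_true_eq, Int.dvd_iff_emod_eq_zero]
  · rw [List.sum_ofFn] at h3
    exact Int.dvd_of_emod_eq_zero h3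
  · rw [List.map_ofFn, List.sum_ofFn] at h4
    exact h4
  · have := getD_ofFn T 21
    have := getD_ofFn T 23
    simp_all
  · have := getD_ofFn T 22
    have := getD_ofFn T 23
    simp_all

lemma all_eq {f g : Fin 24 → ℤ} (hle : ∀ i, g i ≤ f i) (hs : ∑ i, f i ≤ ∑ i, g i) (i : Fin 24) :
    f i = g i := by
  have h := (Finset.sum_eq_sum_iff_of_le (s := Finset.univ) (fun i _ => hle i)).1
    (le_antisymm (Finset.sum_le_sum fun i _ => hle i) hs)
  exact (h i (Finset.mem_univ i)).symm

lemma bt_cases (w i : ℕ) : (w.testBit i = true ∧ bt w i = 1) ∨ (w.testBit i = false ∧ bt w i = 0) := by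
  unfold bt
  cases w.testBit i <;> simp

lemma mem_LL (T : Fin 24 → ℤ) (h : T ∈ TAB) : List.ofFn T ∈ LL := by
  obtain ⟨⟨m, hm, hpar, hc, hsum⟩, hin⟩ := h
  obtain ⟨hsq, hA, hB⟩ := (inner_iff T).1 hin
  obtain ⟨w, hw, hcw⟩ := golay_words hc
  have hbit : ∀ i : Fin 24, w.testBit i = true ↔ (4 : ℤ) ∣ (T i - m - 2) := by
    intro i
    have := congrFun hcw i
    simp only [bits] at this
    split_ifs at this <;> simp_all
  have hwt := words_wt w hw
  have hpop : ((pop w : ℕ) : ℤ) = ∑ i : Fin 24, (bt w i : ℤ) := by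
    rw [pop_eq]; push_cast; rfl
  have ha : 3 * T 23 * T 23 + 16 * T 23 ≤ 0 := by
    have h := hsq
    rw [sum_split] at h
    have hn : 0 ≤ ∑ i : Fin 21, T (Fin.castLE (by norm_num) i) * T (Fin.castLE (by norm_num) i) :=
      Finset.sum_nonneg fun i _ => mul_self_nonneg _
    have e1 : T 21 = T 23 + 4 := by omega
    have e2 : T 22 = T 23 + 4 := by omega
    rw [e1, e2] at h
    nlinarith
  have ha0 : T 23 ≤ 0 := by nlinarith
  have ha1 : -5 ≤ T 23 := by nlinarith
  have p23 := hpar 23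
  have b21 : w.testBit 21 = true ↔ (4 : ℤ) ∣ (T 21 - m - 2) := hbit 21
  have b22 : w.testBit 22 = true ↔ (4 : ℤ) ∣ (T 22 - m - 2) := hbit 22
  have b23 : w.testBit 23 = true ↔ (4 : ℤ) ∣ (T 23 - m - 2) := hbit 23
  unfold LL
  rcases hm with rfl | rfl
  · have hsq4 : ∀ i : Fin 24, 4 * (bt w i : ℤ) ≤ T i * T i := by
      intro i
      rcases bt_cases w i with ⟨h1, h2⟩ | ⟨h1, h2⟩
      · rw [h2]
        have := (hbit i).1 h1
        have : T i ≤ -2 ∨ 2 ≤ T i := by omega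
        push_cast
        rcases this with h | h <;> nlinarith
      · rw [h2]
        have := mul_self_nonneg (T i)
        simpa using this
    have hcase : T 23 = 0 ∨ T 23 = -4 ∨ T 23 = -2 := by omega
    rcases hcase with h23 | h23 | h23
    · have h21 : T 21 = 4 := by omega
      have h22 : T 22 = 4 := by omega
      have key := all_eq (f := fun i => T i * T i)
        (g := fun i => if (i : ℕ) = 21 ∨ (i : ℕ) = 22 then 16 else 0) (by
          intro i
          split_ifs with hi
          · have : i = 21 ∨ i = 22 := by
              rcases hi with hi | hi
              · left; exact Fin.ext hi
              · right; exact Fin.ext hi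
            rcases this with rfl | rfl
            · rw [h21]; norm_num
            · rw [h22]; norm_num
          · exact mul_self_nonneg _) (by rw [hsq]; decide)
      have : List.ofFn T ∈ L0 := by
        rw [L0, List.mem_singleton]
        apply ofFn_mk
        intro i
        have hk := key i
        split_ifs at hk ⊢ with hi
        · rcases hi with hi | hi
          · rw [show i = 21 from Fin.ext hi]; exact h21
          · rw [show i = 22 from Fin.ext hi]; exact h22
        · exact mul_self_eq_zero.1 hk
      simp only [List.mem_append, this, true_or, or_true]
    · have h21 : T 21 = 0 := by omega
      have h22 : T 22 = 0 := by omega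
      have hle : ∀ i : Fin 24, 4 * (bt w i : ℤ) + (if i = 23 then 16 else 0) ≤ T i * T i := by
        intro i
        split_ifs with hi
        · subst hi
          have : bt w (23 : Fin 24) = 0 := by
            rcases bt_cases w 23 with ⟨h1, h2⟩ | ⟨h1, h2⟩
            · have := b23.1 h1; omega
            · exact h2
          rw [this, h23]; norm_num
        · have := hsq4 i
          omega
      have hs := Finset.sum_le_sum (s := Finset.univ) (fun i _ => hle i)
      rw [hsq, Finset.sum_add_distrib, ← Finset.mul_sum, ← hpop] at hs
      simp only [Finset.sum_ite_eq', Finset.mem_univ, if_true] at hs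
      have hw0 : w = 0 := by
        rcases hwt with h | h
        · exact h
        · omega
      have h4 : ∀ i, (4 : ℤ) ∣ T i := by
        intro i
        have h1 := hbit i
        rw [hw0] at h1
        simp at h1
        have := hpar i
        omega
      choose y hy using h4
      have hy2 : ∑ i, y i * y i = 2 := by
        have : ∑ i, T i * T i = 16 * ∑ i, y i * y i := by
          rw [Finset.mul_sum]
          refine Finset.sum_congr rfl fun i _ => ?_
          rw [hy i]; ring
        omega
      have hy23 : y 23 = -1 := by have := hy 23; omega
      have hex : ∃ k : Fin 24, k ≠ 23 ∧ y k ≠ 0 := by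
        by_contra! hcon
        rw [Finset.sum_eq_single 23 (fun b _ hb => by rw [hcon b hb]; rfl) (by simp), hy23] at hy2
        norm_num at hy2
      obtain ⟨k, hk, hyk⟩ := hex
      have key := all_eq (f := fun i => y i * y i)
        (g := fun i => (if i = k then 1 else 0) + (if i = 23 then 1 else 0)) (by
          intro i
          by_cases h1 : i = k
          · subst h1
            have : 0 < y i * y i := mul_self_pos.2 hyk
            simp [hk]; omega
          · by_cases h2 : i = 23
            · subst h2
              simp [h1, hy23]
            · simp [h1, h2, mul_self_nonneg]) (by
          rw [hy2, Finset.sum_add_distrib]; simp)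
      have hk21 : k ≠ 21 := by
        rintro rfl
        have := hy 21
        omega
      have hk22 : k ≠ 22 := by
        rintro rfl
        have := hy 22
        omega
      have hklt : (k : ℕ) < 21 := by
        have := k.2
        have e1 : (k : ℕ) ≠ 21 := fun h => hk21 (Fin.ext h)
        have e2 : (k : ℕ) ≠ 22 := fun h => hk22 (Fin.ext h)
        have e3 : (k : ℕ) ≠ 23 := fun h => hk (Fin.ext h)
        omega
      have hyk1 : y k = 1 ∨ y k = -1 := by
        have := key k
        simp [hk] at this
        exact mul_self_eq_one_iff.1 this
      have : List.ofFn T ∈ L1 := by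
        rw [L1, List.mem_flatMap]
        refine ⟨k, List.mem_range.2 hklt, ?_⟩
        rw [List.mem_map]
        refine ⟨T k, ?_, ?_⟩
        · have := hy k
          rcases hyk1 with h | h <;> rw [h] at this <;> simp [this]
        · symm
          apply ofFn_mk
          intro i
          have hki := key i
          by_cases h1 : i = k
          · simp [h1]
          · have h1' : (i : ℕ) ≠ k := fun h => h1 (Fin.ext h)
            by_cases h2 : i = 23
            · subst h2
              rw [if_neg h1']
              simpa using h23
            · have h2' : (i : ℕ) ≠ 23 := fun h => h2 (Fin.ext h)
              rw [if_neg h1', if_neg h2', hy i]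
              simp [h1, h2] at hki
              simp [hki]
      simp only [List.mem_append, this, true_or, or_true]
    · have h21 : T 21 = 2 := by omega
      have h22 : T 22 = 2 := by omega
      have t21 := b21.2 (by rw [h21]; norm_num)
      have t22 := b22.2 (by rw [h22]; norm_num)
      have t23 := b23.2 (by rw [h23]; norm_num)
      have hs := Finset.sum_le_sum (s := Finset.univ) (fun i _ => hsq4 i)
      rw [hsq, ← Finset.mul_sum, ← hpop] at hs
      have hp8 : pop w = 8 := by
        rcases hwt with h | h
        · rw [h] at t21; simp at t21
        · omega
      have key := all_eq hsq4 (by rw [hsq, ← Finset.mul_sum, ← hpop, hp8]; norm_num)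
      have : List.ofFn T ∈ L2 := by
        rw [L2, List.mem_flatMap]
        refine ⟨w, ?_, ?_⟩
        · simp [octads, hw, t21, t22, t23, hp8]
        · rw [List.mem_filter]
          refine ⟨?_, ?_⟩
          · rw [List.mem_sections, List.forall₂_iff_get]
            refine ⟨by simp [choices, mk], ?_⟩
            intro i h1 h2
            have hi : i < 24 := by simpa using h1
            have hki := key ⟨i, hi⟩
            simp only [choices, mk, List.get_eq_getElem, List.getElem_ofFn, List.getElem_map,
              List.getElem_range]
            by_cases e1 : i = 21
            · subst e1; simpa using h21
            by_cases e2 : i = 22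
            · subst e2; simpa using h22
            by_cases e3 : i = 23
            · subst e3; simpa using h23
            simp only [e1, e2, e3, or_self, if_false]
            rcases bt_cases w i with ⟨g1, g2⟩ | ⟨g1, g2⟩
            · simp only [g2] at hki
              have : (T ⟨i, hi⟩ - 2) * (T ⟨i, hi⟩ + 2) = 0 := by push_cast at hki; linarith
              rcases mul_eq_zero.1 this with h | h
              · have : T ⟨i, hi⟩ = 2 := by omega
                simp [g1, this]
              · have : T ⟨i, hi⟩ = -2 := by omega
                simp [g1, this]
            · simp only [g2] at hki
              have : T ⟨i, hi⟩ = 0 := mul_self_eq_zero.1 (by simpa using hki)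
              simp [g1, this]
          · rw [List.sum_ofFn]
            simp only [decide_eq_true_eq]
            omega
      simp only [List.mem_append, this, true_or, or_true]
  · have hge : ∀ i : Fin 24, 1 ≤ T i * T i := by
      intro i
      have : T i ≠ 0 := by have := hpar i; omega
      have := mul_self_pos.2 this
      omega
    have hlow : 21 + T 21 * T 21 + T 22 * T 22 + T 23 * T 23 ≤ 32 := by
      have h := hsq
      rw [sum_split] at h
      have := Finset.sum_le_sum (s := (Finset.univ : Finset (Fin 21)))
        (fun i _ => hge (Fin.castLE (by norm_num) i))
      simp at this
      omega
    have h23 : T 23 = -3 := by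
      have hcase : T 23 = -1 ∨ T 23 = -3 ∨ T 23 = -5 := by omega
      rcases hcase with h | h | h
      · rw [h, show T 21 = 3 by omega, show T 22 = 3 by omega] at hlow
        norm_num at hlow
      · exact h
      · rw [h] at hlow
        nlinarith [mul_self_nonneg (T 21), mul_self_nonneg (T 22)]
    have h21 : T 21 = 1 := by omega
    have h22 : T 22 = 1 := by omega
    have t21 : w.testBit 21 = false := by
      rw [← Bool.not_eq_true, b21]; omega
    have t22 : w.testBit 22 = false := by
      rw [← Bool.not_eq_true, b22]; omega
    have t23 : w.testBit 23 = false := by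
      rw [← Bool.not_eq_true, b23]; omega
    have key := all_eq (f := fun i => T i * T i) (g := fun i => 1 + if i = 23 then 8 else 0) (by
      intro i
      split_ifs with hi
      · subst hi; rw [h23]; norm_num
      · simpa using hge i) (by rw [hsq, Finset.sum_add_distrib]; simp)
    have : List.ofFn T ∈ L3 := by
      rw [L3, List.mem_map]
      refine ⟨w, by simp [hw, t21, t22, t23], ?_⟩
      symm
      apply ofFn_mk
      intro i
      have hki := key i
      have hb := hbit i
      by_cases h2 : i = 23
      · subst h2; simpa using h23
      · have h2' : (i : ℕ) ≠ 23 := fun h => h2 (Fin.ext h)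
        simp only [h2, if_false, add_zero] at hki
        rw [if_neg h2']
        rcases mul_self_eq_one_iff.1 hki with h | h
        · rw [if_neg (by rw [hb, h]; norm_num), h]
        · rw [if_pos (by rw [hb, h]; norm_num), h]
    simp only [List.mem_append, this, true_or, or_true]

/-- `T_AB` has exactly 891 elements. -/
theorem card_TAB : Nat.card ↥TAB = 891 := by
  have himg : List.ofFn '' TAB = (LL.toFinset : Set (List ℤ)) := by
    ext l
    simp only [Set.mem_image, List.coe_toFinset, Set.mem_ofPred_eq]
    constructor
    · rintro ⟨T, hT, rfl⟩
      exact mem_LL T hT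
    · intro hl
      have hc := LL_chk l hl
      have hlen : l.length = 24 := hc.1
      have : List.ofFn (fun i : Fin 24 => l.get (i.cast hlen.symm)) = l := by
        apply List.ext_getElem
        · simp [hlen]
        · intro i h1 h2
          rw [List.getElem_ofFn]
          rfl
      refine ⟨_, ?_, this⟩
      apply mem_of_chk
      rw [this]
      exact hc
  rw [Nat.card_coe_set_eq, ← Set.ncard_image_of_injective TAB List.ofFn_injective, himg,
    Set.ncard_coe_finset, List.toFinset_card_of_nodup LL_nodup, LL_length]
end

section
/- Let C₂₁ be the shortening of the extended binary Golay code C₂₄ at positions {22,23,24}, i.e. C₂₁ = {w|_{1..21} : w ∈ C₂₄, w(22)=w(23)=w(24)}. Then C₂₁ is a [21,10] binary linear code with weight distribution 0¹ 5²¹ 8²¹⁰ 9²⁸⁰ 12²⁸⁰ 13²¹⁰ 16²¹ 21¹. -/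
open scoped BigOperators

/-- Codewords of `C₂₄` taking equal values at positions 22, 23, 24. -/
def GolayEq : Submodule (ZMod 2) (Fin 24 → ZMod 2) :=
  GolayCode
    ⊓ LinearMap.ker
        ((LinearMap.proj ⟨21, by omega⟩ : (Fin 24 → ZMod 2) →ₗ[ZMod 2] ZMod 2)
          - LinearMap.proj ⟨23, by omega⟩)
    ⊓ LinearMap.ker
        ((LinearMap.proj ⟨22, by omega⟩ : (Fin 24 → ZMod 2) →ₗ[ZMod 2] ZMod 2)
          - LinearMap.proj ⟨23, by omega⟩)

/-- The shortened code `C₂₁`: restrictions to the first 21 coordinates. -/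
def C21 : Submodule (ZMod 2) (Fin 21 → ZMod 2) :=
  Submodule.map
    (LinearMap.funLeft (ZMod 2) (ZMod 2) (Fin.castLE (by omega))) GolayEq

/-- The weight of a binary word of length 21. -/
noncomputable def wt21 (w : Fin 21 → ZMod 2) : ℕ := Nat.card {i : Fin 21 // w i ≠ 0}


/-- Coefficients, with respect to the rows of the generator matrix, of a word of `GolayEq`. -/
def cvec (x : Fin 10 → ZMod 2) : Fin 12 → ZMod 2 :=
  ![x 0, x 1, x 2 + x 4 + x 5 + x 7 + x 8, x 2 + x 3 + x 4 + x 7 + x 9,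
    x 2, x 3, x 4, x 5, x 6, x 7, x 8, x 9]

/-- The word of `GolayEq` with parameters `x`. -/
def gword (x : Fin 10 → ZMod 2) : Fin 24 → ZMod 2 := ∑ k, cvec x k • golayMatrix k

/-- Its restriction. -/
def word (x : Fin 10 → ZMod 2) : Fin 21 → ZMod 2 := fun i => gword x (Fin.castLE (by omega) i)

/-- Weight in terms of natural number coefficients. -/
def wtC (c0 c1 c2 c3 c4 c5 c6 c7 c8 c9 c10 c11 : ℕ) : ℕ :=
  (c11) % 2 +
  (c10) % 2 +
  (c9) % 2 +
  (c8) % 2 +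
  (c7) % 2 +
  (c6) % 2 +
  (c5) % 2 +
  (c5 + c6 + c7 + c8 + c9 + c10 + c11) % 2 +
  (c4) % 2 +
  (c3) % 2 +
  (c2) % 2 +
  (c2 + c3 + c4 + c8 + c9 + c10 + c11) % 2 +
  (c1) % 2 +
  (c1 + c3 + c4 + c6 + c7 + c10 + c11) % 2 +
  (c1 + c2 + c4 + c5 + c7 + c9 + c11) % 2 +
  (c1 + c2 + c3 + c5 + c6 + c8 + c11) % 2 +
  (c0) % 2 +
  (c0 + c3 + c4 + c5 + c7 + c8 + c11) % 2 +
  (c0 + c2 + c4 + c5 + c6 + c8 + c9) % 2 +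
  (c0 + c2 + c3 + c6 + c7 + c8 + c10) % 2 +
  (c0 + c1 + c4 + c7 + c8 + c9 + c10) % 2

/-- Weight of the `n`-th word. -/
def wtN (n : ℕ) : ℕ :=
  wtC (n / 1 % 2)
    (n / 2 % 2)
    ((n / 4 % 2) + (n / 16 % 2) + (n / 32 % 2) + (n / 128 % 2) + (n / 256 % 2))
    ((n / 4 % 2) + (n / 8 % 2) + (n / 16 % 2) + (n / 128 % 2) + (n / 512 % 2))
    (n / 4 % 2)
    (n / 8 % 2)
    (n / 16 % 2)
    (n / 32 % 2)
    (n / 64 % 2)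
    (n / 128 % 2)
    (n / 256 % 2)
    (n / 512 % 2)

theorem gword_mem (x : Fin 10 → ZMod 2) : gword x ∈ GolayEq := by
  have h2 : (2 : ZMod 2) = 0 := by decide
  refine ⟨⟨?_, ?_⟩, ?_⟩
  · exact Submodule.sum_mem _ fun k _ => Submodule.smul_mem _ _ (Submodule.subset_span ⟨k, rfl⟩)
  · simp [gword, cvec, golayMatrix, Fin.sum_univ_succ]
    ring_nf
    reduce_mod_char
  · simp [gword, cvec, golayMatrix, Fin.sum_univ_succ]
    ring_nf
    reduce_mod_char

theorem exists_gword (v : Fin 24 → ZMod 2) (hv : v ∈ GolayEq) : ∃ x, v = gword x := by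
  obtain ⟨⟨h, h1⟩, h2⟩ := hv
  obtain ⟨c, rfl⟩ := (Submodule.mem_span_range_iff_exists_fun _).1 h
  refine ⟨![c 0, c 1, c 4, c 5, c 6, c 7, c 8, c 9, c 10, c 11], ?_⟩
  unfold gword
  congr 1
  funext k
  congr 1
  have e2 : (2 : ZMod 2) = 0 := by decide
  have h3 : c 2 = c 4 + c 6 + c 7 + c 9 + c 10 := by
    simp [golayMatrix, Fin.sum_univ_succ] at h1
    linear_combination -h1 - (c 4 + c 10) * e2
  have h4 : c 3 = c 4 + c 5 + c 6 + c 9 + c 11 := by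
    simp [golayMatrix, Fin.sum_univ_succ] at h2
    linear_combination -h2 - (c 4 + c 5) * e2
  fin_cases k <;> simp [cvec, h3, h4]

theorem word_injective : Function.Injective word := by
  intro x y h
  have e (i : Fin 21) : word x i = word y i := by rw [h]
  have h0 := e 16
  have h1 := e 12
  have h2 := e 8
  have h3 := e 6
  have h4 := e 5
  have h5 := e 4
  have h6 := e 3
  have h7 := e 2
  have h8 := e 1
  have h9 := e 0
  simp [word, gword, cvec, golayMatrix, Fin.sum_univ_succ] at h0 h1 h2 h3 h4 h5 h6 h7 h8 h9
  funext k
  fin_cases k <;> simp <;> assumption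

theorem mem_C21 (w : Fin 21 → ZMod 2) : w ∈ C21 ↔ ∃ x, word x = w := by
  constructor
  · rintro ⟨v, hv, rfl⟩
    obtain ⟨x, rfl⟩ := exists_gword v hv
    exact ⟨x, rfl⟩
  · rintro ⟨x, rfl⟩
    exact ⟨gword x, gword_mem x, rfl⟩

theorem wt21_eq (w : Fin 21 → ZMod 2) : wt21 w = ∑ i, (w i).val := by
  unfold wt21
  rw [Nat.card_eq_fintype_card, Fintype.card_subtype, Finset.card_filter]
  refine Finset.sum_congr rfl fun i _ => ?_
  generalize w i = a
  revert a
  decide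

/-- The `n`-th parameter vector. -/
def par (n : Fin 1024) : Fin 10 → ZMod 2 := (finFunctionFinEquiv (m := 2) (n := 10)).symm n

theorem par_apply (n : Fin 1024) (j : Fin 10) :
    par n j = ((n.val / 2 ^ j.val % 2 : ℕ) : ZMod 2) := by
  apply ZMod.val_injective 2
  rw [ZMod.val_natCast, Nat.mod_mod]
  rfl

set_option maxHeartbeats 2000000 in
theorem wt21_par (n : Fin 1024) : wt21 (word (par n)) = wtN n.val := by
  rw [wt21_eq]
  have key (c : Fin 12 → ℕ) (hc : ∀ k, cvec (par n) k = (c k : ZMod 2)) :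
      ∑ i, (word (par n) i).val = wtC (c 0) (c 1) (c 2) (c 3) (c 4) (c 5) (c 6) (c 7)
        (c 8) (c 9) (c 10) (c 11) := by
    have e (i : Fin 21) (m : ℕ) (h : word (par n) i = (m : ZMod 2)) :
        (word (par n) i).val = m % 2 := by rw [h, ZMod.val_natCast]
    refine (Finset.sum_congr rfl fun i _ => e i ((![c 11,
      c 10,
      c 9,
      c 8,
      c 7,
      c 6,
      c 5,
      c 5 + c 6 + c 7 + c 8 + c 9 + c 10 + c 11,
      c 4,
      c 3,
      c 2,
      c 2 + c 3 + c 4 + c 8 + c 9 + c 10 + c 11,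
      c 1,
      c 1 + c 3 + c 4 + c 6 + c 7 + c 10 + c 11,
      c 1 + c 2 + c 4 + c 5 + c 7 + c 9 + c 11,
      c 1 + c 2 + c 3 + c 5 + c 6 + c 8 + c 11,
      c 0,
      c 0 + c 3 + c 4 + c 5 + c 7 + c 8 + c 11,
      c 0 + c 2 + c 4 + c 5 + c 6 + c 8 + c 9,
      c 0 + c 2 + c 3 + c 6 + c 7 + c 8 + c 10,
      c 0 + c 1 + c 4 + c 7 + c 8 + c 9 + c 10] : Fin 21 → ℕ) i) ?_).trans ?_
    · fin_cases i <;> simp [word, gword, golayMatrix, Fin.sum_univ_succ, hc] <;> ring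
    · simp only [Fin.sum_univ_castSucc, Fin.sum_univ_zero, zero_add]
      rfl
  refine key ![(n.val / 1 % 2), (n.val / 2 % 2), ((n.val / 4 % 2) + (n.val / 16 % 2) + (n.val / 32 % 2) + (n.val / 128 % 2) + (n.val / 256 % 2)), ((n.val / 4 % 2) + (n.val / 8 % 2) + (n.val / 16 % 2) + (n.val / 128 % 2) + (n.val / 512 % 2)), (n.val / 4 % 2), (n.val / 8 % 2), (n.val / 16 % 2), (n.val / 32 % 2), (n.val / 64 % 2), (n.val / 128 % 2), (n.val / 256 % 2), (n.val / 512 % 2)] ?_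
  intro k
  fin_cases k <;> simp [cvec, par_apply]

/-- Enumeration of the code. -/
noncomputable def enumC : Fin 1024 ≃ ↥C21 :=
  ((finFunctionFinEquiv (m := 2) (n := 10)).symm).trans
    (Equiv.ofBijective (fun x : Fin 10 → ZMod 2 => (⟨word x, (mem_C21 _).2 ⟨x, rfl⟩⟩ : ↥C21))
      ⟨fun x y h => word_injective (congrArg Subtype.val h), fun w => by
        obtain ⟨x, hx⟩ := (mem_C21 _).1 w.2
        exact ⟨x, Subtype.ext hx⟩⟩)

theorem wt21_enumC (n : Fin 1024) : wt21 (enumC n).val = wtN n.val := wt21_par n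

theorem card_wt (k : ℕ) :
    Nat.card {w : ↥C21 // wt21 w.val = k} = (Finset.univ.filter fun n : Fin 1024 => wtN n.val = k).card := by
  rw [← Nat.card_congr (enumC.subtypeEquiv (p := fun n => wtN n.val = k)
    (fun n => by rw [wt21_enumC]))]
  rw [Nat.card_eq_fintype_card, Fintype.card_subtype]

theorem weights_mem : ∀ n : Fin 1024, wtN n.val ∈ [0, 5, 8, 9, 12, 13, 16, 21] := by
  decide +kernel

/-- `C₂₁` is a `[21,10]` binary code with weight distribution
`0¹ 5²¹ 8²¹⁰ 9²⁸⁰ 12²⁸⁰ 13²¹⁰ 16²¹ 21¹`. -/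
theorem C21_dim_and_weights :
    Module.finrank (ZMod 2) ↥C21 = 10 ∧
    (∀ w ∈ C21, wt21 w ∈ ({0, 5, 8, 9, 12, 13, 16, 21} : Set ℕ)) ∧
    Nat.card {w : ↥C21 // wt21 w.val = 0} = 1 ∧
    Nat.card {w : ↥C21 // wt21 w.val = 5} = 21 ∧
    Nat.card {w : ↥C21 // wt21 w.val = 8} = 210 ∧
    Nat.card {w : ↥C21 // wt21 w.val = 9} = 280 ∧
    Nat.card {w : ↥C21 // wt21 w.val = 12} = 280 ∧
    Nat.card {w : ↥C21 // wt21 w.val = 13} = 210 ∧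
    Nat.card {w : ↥C21 // wt21 w.val = 16} = 21 ∧
    Nat.card {w : ↥C21 // wt21 w.val = 21} = 1 := by 
  refine ⟨?_, ?_, ?_, ?_, ?_, ?_, ?_, ?_, ?_, ?_⟩
  · have : Fintype ↥C21 := Fintype.ofEquiv _ enumC
    have h := Module.card_eq_pow_finrank (K := ZMod 2) (V := ↥C21)
    rw [← Nat.card_eq_fintype_card, ← Nat.card_congr enumC] at h
    simp only [Nat.card_eq_fintype_card, Fintype.card_fin, ZMod.card] at h
    exact (Nat.pow_right_injective (le_refl 2) (h.symm.trans (by norm_num : 1024 = 2 ^ 10)))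
  · intro w hw
    obtain ⟨n, hn⟩ := enumC.surjective ⟨w, hw⟩
    have h := weights_mem n
    rw [← wt21_enumC, hn] at h
    simpa using h
  all_goals
    rw [card_wt]
    decide +kernel
end

section
/- The binary code H generated by the lines of P²(F₄) and the shortened Golay code C₂₁ are equivalent codes, i.e. there exists a bijection between their coordinate sets carrying one code onto the other. -/
open scoped BigOperators

open scoped Classical

/-- The field `F₄`. -/
abbrev F4 : Type := GaloisField 2 2

/-- Points of `P²(F₄)` as 1-dimensional subspaces of `F₄³`. -/
def ProjPt : Type := {p : Submodule F4 (Fin 3 → F4) // Module.finrank F4 p = 1}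

/-- `F₄`-rational lines of `P²` as 2-dimensional subspaces of `F₄³`. -/
def ProjLine : Type := {l : Submodule F4 (Fin 3 → F4) // Module.finrank F4 l = 2}

/-- Characteristic vector of a line. -/
noncomputable def lineWord (l : ProjLine) : ProjPt → ZMod 2 :=
  fun p => if p.val ≤ l.val then 1 else 0

/-- The code `H` spanned by the line words. -/
noncomputable def Hcode : Submodule (ZMod 2) (ProjPt → ZMod 2) :=
  Submodule.span (ZMod 2) (Set.range lineWord)

inductive K4 : Type
  | z | o | a | b
  deriving DecidableEq

namespace K4

instance : Fintype K4 where
  elems := ⟨[K4.z, K4.o, K4.a, K4.b], by decide⟩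
  complete := by intro x; cases x <;> decide

def add' : K4 → K4 → K4
  | .z, y => y
  | x, .z => x
  | .o, .o => .z
  | .o, .a => .b
  | .o, .b => .a
  | .a, .o => .b
  | .a, .a => .z
  | .a, .b => .o
  | .b, .o => .a
  | .b, .a => .o
  | .b, .b => .z

def mul' : K4 → K4 → K4
  | .z, _ => .z
  | _, .z => .z
  | .o, y => y
  | x, .o => x
  | .a, .a => .b
  | .a, .b => .o
  | .b, .a => .o
  | .b, .b => .a

def inv' : K4 → K4
  | .z => .z
  | .o => .o
  | .a => .b
  | .b => .a

instance : Add K4 := ⟨add'⟩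
instance : Mul K4 := ⟨mul'⟩
instance : Zero K4 := ⟨.z⟩
instance : One K4 := ⟨.o⟩
instance : Neg K4 := ⟨id⟩
instance : Inv K4 := ⟨inv'⟩

instance : Field K4 where
  add_assoc := by decide
  zero_add := by decide
  add_zero := by decide
  add_comm := by decide
  neg_add_cancel := by decide
  mul_assoc := by decide
  one_mul := by decide
  mul_one := by decide
  zero_mul := by decide
  mul_zero := by decide
  mul_comm := by decide
  left_distrib := by decide
  right_distrib := by decide
  exists_pair_ne := ⟨.z, .o, by decide⟩
  mul_inv_cancel := by decide
  inv_zero := by decide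
  nsmul := nsmulRec
  zsmul := zsmulRec
  nnqsmul := _
  qsmul := _

end K4

def kpt : Fin 21 → Fin 3 → K4 :=
  ![![.z, .z, .o],
    ![.z, .o, .z],
    ![.z, .o, .o],
    ![.z, .o, .a],
    ![.o, .z, .z],
    ![.o, .o, .b],
    ![.o, .a, .o],
    ![.o, .b, .a],
    ![.o, .z, .o],
    ![.o, .b, .b],
    ![.o, .o, .a],
    ![.o, .a, .z],
    ![.o, .z, .a],
    ![.o, .a, .b],
    ![.o, .b, .z],
    ![.o, .o, .o],
    ![.o, .z, .b],
    ![.o, .o, .z],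
    ![.o, .a, .a],
    ![.o, .b, .o],
    ![.z, .o, .b]]

/-- explicit three term dot product -/
def kdot (u v : Fin 3 → K4) : K4 := u 0 * v 0 + u 1 * v 1 + u 2 * v 2

/-- incidence matrix -/
def incN : Matrix (Fin 21) (Fin 21) (ZMod 2) :=
  fun j i => if kdot (kpt j) (kpt i) = K4.z then 1 else 0

def matA : Matrix (Fin 21) (Fin 12) (ZMod 2) :=
  !![0, 0, 0, 0, 0, 0, 0, 1, 0, 0, 1, 0;
    1, 1, 0, 0, 1, 0, 0, 1, 0, 0, 0, 1;
    0, 0, 0, 1, 0, 0, 0, 1, 0, 1, 0, 0;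
    0, 0, 0, 0, 0, 1, 1, 1, 0, 0, 0, 0;
    0, 0, 0, 0, 0, 0, 0, 0, 1, 1, 1, 1;
    0, 1, 0, 1, 0, 1, 0, 0, 1, 0, 0, 0;
    0, 0, 0, 0, 1, 0, 1, 0, 1, 0, 0, 0;
    1, 0, 0, 0, 0, 0, 0, 0, 1, 0, 0, 0;
    0, 0, 0, 0, 1, 1, 0, 0, 0, 0, 1, 0;
    0, 1, 0, 0, 0, 0, 1, 0, 0, 1, 0, 0;
    1, 0, 0, 0, 0, 0, 0, 0, 0, 0, 0, 0;
    0, 0, 0, 1, 0, 0, 0, 0, 0, 0, 0, 1;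
    1, 0, 0, 1, 0, 0, 1, 0, 0, 0, 1, 0;
    0, 1, 0, 0, 0, 0, 0, 0, 0, 0, 0, 0;
    0, 0, 0, 0, 0, 1, 0, 0, 0, 0, 0, 1;
    0, 0, 0, 0, 1, 0, 0, 0, 0, 1, 0, 0;
    0, 1, 1, 0, 0, 0, 0, 0, 0, 0, 1, 0;
    0, 0, 1, 0, 0, 0, 1, 0, 0, 0, 0, 1;
    1, 0, 1, 0, 0, 1, 0, 0, 0, 1, 0, 0;
    0, 0, 1, 1, 1, 0, 0, 0, 0, 0, 0, 0;
    0, 0, 1, 0, 0, 0, 0, 1, 1, 0, 0, 0]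

def matM : Matrix (Fin 12) (Fin 21) (ZMod 2) :=
  !![0, 1, 1, 0, 1, 1, 0, 0, 1, 0, 0, 0, 0, 0, 0, 0, 0, 0, 0, 0, 0;
    0, 1, 1, 0, 1, 0, 1, 0, 0, 0, 0, 0, 1, 0, 0, 0, 0, 0, 0, 0, 0;
    1, 0, 0, 1, 1, 1, 0, 0, 0, 0, 0, 0, 1, 0, 0, 0, 1, 0, 0, 0, 0;
    1, 1, 0, 0, 1, 1, 0, 0, 1, 0, 0, 0, 0, 0, 0, 0, 0, 0, 0, 0, 0;
    1, 1, 0, 0, 0, 1, 1, 0, 1, 0, 0, 0, 1, 0, 0, 0, 0, 0, 0, 0, 0;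
    0, 0, 1, 1, 0, 0, 0, 0, 0, 0, 0, 0, 1, 0, 0, 0, 0, 0, 0, 0, 0;
    0, 1, 0, 1, 0, 1, 1, 0, 0, 0, 0, 0, 1, 0, 0, 0, 0, 0, 0, 0, 0;
    0, 1, 1, 1, 0, 1, 1, 0, 0, 0, 0, 0, 0, 0, 0, 0, 0, 0, 0, 0, 0;
    1, 0, 0, 1, 0, 0, 1, 0, 1, 0, 0, 0, 0, 0, 0, 0, 0, 0, 0, 0, 0;
    1, 0, 0, 1, 1, 0, 1, 0, 1, 0, 0, 0, 0, 0, 0, 0, 0, 0, 0, 0, 0;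
    1, 1, 1, 1, 0, 1, 1, 0, 0, 0, 0, 0, 0, 0, 0, 0, 0, 0, 0, 0, 0;
    1, 1, 1, 1, 0, 1, 1, 0, 0, 0, 0, 0, 0, 0, 0, 0, 0, 0, 0, 0, 0]

def vecU : Fin 21 → ZMod 2 := ![1, 0, 1, 0, 0, 0, 0, 0, 0, 0, 0, 0, 0, 1, 0, 1, 1, 0, 0, 1, 0]

def vecV : Fin 21 → ZMod 2 := ![0, 1, 1, 0, 0, 0, 0, 0, 0, 0, 0, 0, 0, 1, 1, 0, 1, 1, 0, 0, 1]

def rowA (j : Fin 21) (k : Fin 24) : ZMod 2 := ∑ i, matA j i * golayMatrix i k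

lemma A_left_aux : ∀ j k : Fin 21,
    (instDecidableEqFin 2 (rowA j (Fin.castLE (by omega) k)) (incN j k)).decide = true := by
  decide +kernel

lemma A_left (j k : Fin 21) : rowA j (Fin.castLE (by omega) k) = incN j k :=
  @of_decide_eq_true _ (instDecidableEqFin 2 _ _) (A_left_aux j k)

set_option maxRecDepth 100000 in
lemma A_right : ∀ j : Fin 21, rowA j 21 = 1 ∧ rowA j 22 = 1 ∧ rowA j 23 = 1 := by
  decide +kernel

set_option maxRecDepth 100000 in
lemma M_eq : ∀ i : Fin 12, ∀ k : Fin 21, golayMatrix i (Fin.castLE (by omega) k) =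
    (∑ j, matM i j * incN j k) + (golayMatrix i 21 - golayMatrix i 23) * vecU k
      + (golayMatrix i 22 - golayMatrix i 23) * vecV k := by
  decide +kernel

lemma kpt_surj : ∀ x y w : K4, ![x, y, w] ≠ 0 → ∃ i, ∃ c : K4, c ≠ 0 ∧ ![x, y, w] = c • kpt i := by
  decide +kernel

lemma kpt_inj : ∀ i j, ∀ c : K4, kpt i = c • kpt j → i = j := by
  decide +kernel

lemma kpt_ne : ∀ i, kpt i ≠ 0 := by
  decide +kernel

lemma kpt_surj' (v : Fin 3 → K4) (hv : v ≠ 0) : ∃ i, ∃ c : K4, c ≠ 0 ∧ v = c • kpt i := by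
  have h : v = ![v 0, v 1, v 2] := by ext i; fin_cases i <;> rfl
  rw [h] at hv ⊢
  exact kpt_surj _ _ _ hv

/-- the span of the incidence rows is `C21` -/
lemma C21_eq : C21 = Submodule.span (ZMod 2) (Set.range fun j => incN j) := by
  apply le_antisymm
  · rintro w ⟨x, ⟨⟨hx, h1⟩, h2⟩, rfl⟩
    obtain ⟨c, rfl⟩ := (Submodule.mem_span_range_iff_exists_fun _).1 hx
    simp only [SetLike.mem_coe, LinearMap.mem_ker, LinearMap.sub_apply, LinearMap.proj_apply,
      Finset.sum_apply, Pi.smul_apply, smul_eq_mul] at h1 h2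
    refine (Submodule.mem_span_range_iff_exists_fun _).2 ⟨fun j => ∑ i, c i * matM i j, ?_⟩
    ext k
    simp only [LinearMap.funLeft_apply, Finset.sum_apply, Pi.smul_apply, smul_eq_mul]
    have e1 : ∑ i, c i * (golayMatrix i 21 - golayMatrix i 23) = 0 := by
      rw [← h1, ← Finset.sum_sub_distrib]; simp only [mul_sub]; rfl
    have e2 : ∑ i, c i * (golayMatrix i 22 - golayMatrix i 23) = 0 := by
      rw [← h2, ← Finset.sum_sub_distrib]; simp only [mul_sub]; rfl
    have e3 : ∑ i, c i * golayMatrix i (Fin.castLE (by omega) k) =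
        ∑ i, c i * (∑ j, matM i j * incN j k)
        + (∑ i, c i * (golayMatrix i 21 - golayMatrix i 23)) * vecU k
        + (∑ i, c i * (golayMatrix i 22 - golayMatrix i 23)) * vecV k := by
      simp only [M_eq, Finset.sum_mul, ← Finset.sum_add_distrib]
      refine Finset.sum_congr rfl fun i _ => ?_
      ring
    rw [e3, e1, e2]
    simp only [Finset.sum_mul, Finset.mul_sum, zero_mul, add_zero]
    rw [Finset.sum_comm]
    simp only [mul_assoc]
  · rw [Submodule.span_le]
    rintro _ ⟨j, rfl⟩
    refine ⟨rowA j, ⟨⟨?_, ?_⟩, ?_⟩, ?_⟩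
    · refine (Submodule.mem_span_range_iff_exists_fun _).2 ⟨fun i => matA j i, ?_⟩
      ext k
      simp [rowA]
    · obtain ⟨h1, h2, h3⟩ := A_right j
      change rowA j 21 - rowA j 23 = 0
      rw [h1, h3, sub_self]
    · obtain ⟨h1, h2, h3⟩ := A_right j
      change rowA j 22 - rowA j 23 = 0
      rw [h2, h3, sub_self]
    · ext k
      exact A_left j k

lemma exists_iso : Nonempty (K4 ≃+* F4) := by
  have h : Nat.card K4 = Nat.card F4 := by
    rw [GaloisField.card 2 2 (by norm_num), Nat.card_eq_fintype_card]; rfl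
  have : Fintype F4 := Fintype.ofFinite _
  rw [Nat.card_eq_fintype_card, Nat.card_eq_fintype_card] at h
  exact ⟨FiniteField.ringEquivOfCardEq h⟩

noncomputable def iso : K4 ≃+* F4 := exists_iso.some

noncomputable def fpt (i : Fin 21) : Fin 3 → F4 := fun t => iso (kpt i t)

lemma fpt_surj (v : Fin 3 → F4) (hv : v ≠ 0) : ∃ i, ∃ c : F4, c ≠ 0 ∧ v = c • fpt i := by
  obtain ⟨i, c, hc, h⟩ := kpt_surj' (fun t => iso.symm (v t)) (by
    intro h; apply hv; ext t
    have := congrFun h t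
    simpa using this)
  refine ⟨i, iso c, by simpa using hc, ?_⟩
  ext t
  have := congrArg iso (congrFun h t)
  simpa [fpt] using this

lemma fpt_ne (i : Fin 21) : fpt i ≠ 0 := by
  intro h
  apply kpt_ne i
  ext t
  simpa [fpt] using congrFun h t

lemma fpt_inj (i j : Fin 21) (c : F4) (h : fpt i = c • fpt j) : i = j := by
  apply kpt_inj i j (iso.symm c)
  ext t
  have := congrArg iso.symm (congrFun h t)
  simpa [fpt] using this

noncomputable def ptOf (i : Fin 21) : ProjPt :=
  ⟨Submodule.span F4 {fpt i}, finrank_span_singleton (fpt_ne i)⟩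

lemma ptOf_bij : Function.Bijective ptOf := by
  constructor
  · intro i j h
    have h' : Submodule.span F4 {fpt i} = Submodule.span F4 {fpt j} := congrArg Subtype.val h
    have : fpt i ∈ Submodule.span F4 {fpt j} := h' ▸ Submodule.mem_span_singleton_self _
    obtain ⟨c, hc⟩ := Submodule.mem_span_singleton.1 this
    exact fpt_inj i j c hc.symm
  · rintro ⟨p, hp⟩
    obtain ⟨⟨v, hvp⟩, hv, hs⟩ := finrank_eq_one_iff'.1 hp
    obtain ⟨i, c, hc, h⟩ := fpt_surj v (by simpa using hv)
    refine ⟨i, Subtype.ext ?_⟩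
    change Submodule.span F4 {fpt i} = p
    have e : fpt i = c⁻¹ • v := by rw [h, smul_smul, inv_mul_cancel₀ hc, one_smul]
    apply le_antisymm
    · rw [Submodule.span_singleton_le_iff_mem, e]
      exact p.smul_mem _ hvp
    · intro x hx
      obtain ⟨d, hd⟩ := hs ⟨x, hx⟩
      have hd' : d • v = x := congrArg Subtype.val hd
      rw [← hd', h, smul_smul]
      exact Submodule.smul_mem _ _ (Submodule.mem_span_singleton_self _)

/-- linear functional given by dot product -/
noncomputable def dotL (u : Fin 3 → F4) : (Fin 3 → F4) →ₗ[F4] F4 :=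
  u 0 • LinearMap.proj 0 + u 1 • LinearMap.proj 1 + u 2 • LinearMap.proj 2

lemma dotL_apply (u v : Fin 3 → F4) : dotL u v = u 0 * v 0 + u 1 * v 1 + u 2 * v 2 := by
  simp [dotL]

lemma dotL_ne (u : Fin 3 → F4) (hu : u ≠ 0) : dotL u ≠ 0 := by
  intro h
  apply hu
  ext t
  have := LinearMap.congr_fun h (Pi.single t 1)
  rw [dotL_apply] at this
  fin_cases t <;> simpa using this

lemma finrank_ker_of_ne (f : (Fin 3 → F4) →ₗ[F4] F4) (hf : f ≠ 0) :
    Module.finrank F4 (LinearMap.ker f) = 2 := by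
  have h := LinearMap.finrank_range_add_finrank_ker f
  rw [LinearMap.range_eq_top.2 (LinearMap.surjective hf), finrank_top] at h
  simp at h
  omega

noncomputable def lineOf (j : Fin 21) : ProjLine :=
  ⟨LinearMap.ker (dotL (fpt j)), finrank_ker_of_ne _ (dotL_ne _ (fpt_ne j))⟩

lemma lineOf_surj : Function.Surjective lineOf := by
  rintro ⟨l, hl⟩
  have hlt : l < ⊤ := by
    rw [lt_top_iff_ne_top]
    rintro rfl
    rw [finrank_top] at hl
    simp at hl
  obtain ⟨f, hf, hle⟩ := Submodule.exists_le_ker_of_lt_top l hlt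
  have hker : l = LinearMap.ker f :=
    Submodule.eq_of_le_of_finrank_eq hle (by rw [hl, finrank_ker_of_ne f hf])
  set u : Fin 3 → F4 := fun t => f (Pi.single t 1) with hu
  have hfu : f = dotL u := by
    apply LinearMap.pi_ext'
    intro t
    ext
    simp only [LinearMap.comp_apply, dotL_apply]
    fin_cases t <;> simp [hu]
  have hu0 : u ≠ 0 := by
    intro h
    apply hf
    rw [hfu, h]
    ext; simp [dotL]
  obtain ⟨j, c, hc, h⟩ := fpt_surj u hu0
  refine ⟨j, Subtype.ext ?_⟩
  change LinearMap.ker (dotL (fpt j)) = l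
  rw [hker, hfu, h]
  ext v
  have e : dotL (c • fpt j) v = c * dotL (fpt j) v := by
    simp only [dotL_apply, Pi.smul_apply, smul_eq_mul]; ring
  rw [LinearMap.mem_ker, LinearMap.mem_ker, e, mul_eq_zero, or_iff_right hc]

lemma lineWord_eq (j i : Fin 21) : lineWord (lineOf j) (ptOf i) = incN j i := by
  have h : (ptOf i).val ≤ (lineOf j).val ↔ kdot (kpt j) (kpt i) = K4.z := by
    change Submodule.span F4 {fpt i} ≤ LinearMap.ker (dotL (fpt j)) ↔ _
    rw [Submodule.span_singleton_le_iff_mem, LinearMap.mem_ker, dotL_apply]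
    have : fpt j 0 * fpt i 0 + fpt j 1 * fpt i 1 + fpt j 2 * fpt i 2
        = iso (kdot (kpt j) (kpt i)) := by simp [fpt, kdot]
    rw [this]
    exact map_eq_zero_iff iso iso.injective
  unfold lineWord incN
  simp only [h]

/-- the codes `H` and `C₂₁` are equivalent: some bijection of the
coordinate sets carries one onto the other. -/
theorem Hcode_equiv_C21 :
    ∃ e : ProjPt ≃ Fin 21,
      ∀ w : Fin 21 → ZMod 2, w ∈ C21 ↔ (fun p => w (e p)) ∈ Hcode := by
  let e : ProjPt ≃ Fin 21 := (Equiv.ofBijective ptOf ptOf_bij).symm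
  refine ⟨e, fun w => ?_⟩
  have hH : Hcode = Submodule.map
      (LinearEquiv.funCongrLeft (ZMod 2) (ZMod 2) e).toLinearMap C21 := by
    rw [C21_eq, Submodule.map_span, ← Set.range_comp]
    unfold Hcode
    rw [← lineOf_surj.range_comp]
    congr 2
    ext j p
    obtain ⟨i, rfl⟩ := ptOf_bij.2 p
    have : e (ptOf i) = i := (Equiv.ofBijective ptOf ptOf_bij).symm_apply_apply i
    simp only [Function.comp_apply, lineWord_eq]
    change incN j i = incN j (e (ptOf i))
    rw [this]
  rw [hH]
  constructor
  · intro hw; exact ⟨w, hw, rfl⟩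
  · rintro ⟨w', hw', he⟩
    have : w' = w := (LinearEquiv.funCongrLeft (ZMod 2) (ZMod 2) e).injective he
    exact this ▸ hw'
end
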